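/- Suppose g(r) = o(e^{-c r}) as r → ∞ for some c > 0. Then almost surely, lim_{n→∞} (α n d_n^d)/(log n) = 1. -/

import Mathlib

open MeasureTheory ProbabilityTheory Filter Set

noncomputable section

namespace RCM

/-- The toroidal metric on the unit cube. -/
def torusDist {d : ℕ} (x y : EuclideanSpace ℝ (Fin d)) : ℝ :=
  ⨅ z : Fin d → ℤ, ‖x - y - (WithLp.equiv 2 (Fin d → ℝ)).symm (fun i => (z i : ℝ))‖

/-- The half-open unit cube `S = (-1/2, 1/2]^d`. -/
def cube (d : ℕ) : Set (EuclideanSpace ℝ (Fin d)) :=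
  {x | ∀ i, x i ∈ Set.Ioc (-(1/2) : ℝ) (1/2)}

/-- The random connection model: i.i.d. uniform points `X`, coupled Poisson counts `N`,
i.i.d. uniform edge variables `U`, with the three families mutually independent, and a
non-increasing connection function `g : [0,∞) → [0,1]` with finite positive integral `α`. -/
structure Model (d : ℕ) {Ω : Type*} [MeasurableSpace Ω] (P : Measure Ω) where
  g : ℝ → ℝ
  α : ℝ
  X : ℕ → Ω → EuclideanSpace ℝ (Fin d)
  N : ℕ → Ω → ℕ
  U : ℕ → ℕ → Ω → ℝ
  g_antitone : AntitoneOn g (Set.Ici 0)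
  g_mem : ∀ r : ℝ, 0 ≤ r → g r ∈ Set.Icc (0 : ℝ) 1
  g_integrable : MeasureTheory.Integrable (fun x : EuclideanSpace ℝ (Fin d) => g ‖x‖)
  α_def : α = ∫ x : EuclideanSpace ℝ (Fin d), g ‖x‖
  α_pos : 0 < α
  X_meas : ∀ i, Measurable (X i)
  X_unif : ∀ i : ℕ, 1 ≤ i → Measure.map (X i) P = volume.restrict (cube d)
  X_indep : iIndepFun
    (fun i : {i : ℕ // 1 ≤ i} => X i) P
  N_meas : ∀ n, Measurable (N n)
  N_mono : ∀ ω, Monotone fun n => N n ω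
  N_poisson : ∀ n k : ℕ,
    P {ω | N n ω = k} = ENNReal.ofReal (Real.exp (-(n : ℝ)) * (n : ℝ) ^ k / k.factorial)
  U_meas : ∀ i j, Measurable (U i j)
  U_unif : ∀ i j : ℕ, 1 ≤ i → i < j →
    Measure.map (U i j) P = volume.restrict (Set.Icc (0 : ℝ) 1)
  U_indep : iIndepFun
    (fun p : {p : ℕ × ℕ // 1 ≤ p.1 ∧ p.1 < p.2} => U p.1.1 p.1.2) P
  families_indep : iIndep
    (![MeasurableSpace.comap (fun ω => fun i : ℕ => X i ω) inferInstance,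
       MeasurableSpace.comap (fun ω => fun n : ℕ => N n ω) inferInstance,
       MeasurableSpace.comap (fun ω => fun p : ℕ × ℕ => U p.1 p.2 ω) inferInstance]) P

variable {d : ℕ} {Ω : Type*} [MeasurableSpace Ω] {P : Measure Ω}

/-- Adjacency in the graph `G_n(r)`: vertices `1 ≤ i,j ≤ N_n` are joined iff
`U_{ij} ≤ g(dist(X_i,X_j)/r)`. -/
def adj (M : Model d P) (n : ℕ) (r : ℝ) (ω : Ω) (i j : ℕ) : Prop :=
  i ≠ j ∧ 1 ≤ i ∧ 1 ≤ j ∧ i ≤ M.N n ω ∧ j ≤ M.N n ω ∧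
    M.U (min i j) (max i j) ω ≤ M.g (torusDist (M.X i ω) (M.X j ω) / r)

/-- The degree of vertex `i` in `G_n(r)`. -/
def deg (M : Model d P) (n : ℕ) (r : ℝ) (ω : Ω) (i : ℕ) : ℕ :=
  {j : ℕ | adj M n r ω i j}.ncard

/-- `W_n(r)`, the number of isolated vertices of `G_n(r)`. -/
def isolatedCount (M : Model d P) (n : ℕ) (r : ℝ) (ω : Ω) : ℕ :=
  {i : ℕ | 1 ≤ i ∧ i ≤ M.N n ω ∧ deg M n r ω i = 0}.ncard


/-- `r̂_n(γ)` defined by `r̂_n(γ)^d = γ log n / (α n)`. -/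
def rhat (M : Model d P) (γ : ℝ) (n : ℕ) : ℝ :=
  (γ * Real.log n / (M.α * n)) ^ ((1 : ℝ) / d)

/-- `d_n`, the critical parameter for absence of isolated nodes. -/
def critRadius (M : Model d P) (n : ℕ) (ω : Ω) : ℝ :=
  sInf {r : ℝ | 0 < r ∧ isolatedCount M n r ω = 0}

/-- The maximum vertex degree `Δ_n` of `G_n(r)`. -/
def maxDeg (M : Model d P) (n : ℕ) (r : ℝ) (ω : Ω) : ℕ :=
  (Finset.Icc 1 (M.N n ω)).sup (deg M n r ω)

/-- The minimum vertex degree `δ_n` of `G_n(r)`. -/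
def minDeg (M : Model d P) (n : ℕ) (r : ℝ) (ω : Ω) : ℕ :=
  sInf {k : ℕ | ∃ i, 1 ≤ i ∧ i ≤ M.N n ω ∧ deg M n r ω i = k}

/-- The length (toroidal metric) of the longest edge of `G_n(r)` (`0` if there are no edges). -/
def longestEdge (M : Model d P) (n : ℕ) (r : ℝ) (ω : Ω) : ℝ :=
  sSup ({0} ∪ {t : ℝ | ∃ i j, adj M n r ω i j ∧ t = torusDist (M.X i ω) (M.X j ω)})

/-- Connectivity of `G_n(r)`: any two vertices are joined by a path. -/
def connectedGraph (M : Model d P) (n : ℕ) (r : ℝ) (ω : Ω) : Prop :=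
  ∀ i j : ℕ, 1 ≤ i → i ≤ M.N n ω → 1 ≤ j → j ≤ M.N n ω →
    Relation.ReflTransGen (adj M n r ω) i j

/-- `H(x) = 1 - x + x log x` (with `H(0) = 1`, since `log 0 = 0` in Lean). -/
def H (x : ℝ) : ℝ := 1 - x + x * Real.log x

/-- The inverse of the restriction of `H` to `[1, ∞)`. -/
def Hplusinv (y : ℝ) : ℝ := sInf {x : ℝ | 1 ≤ x ∧ y ≤ H x}

/-- The inverse of the restriction of `H` to `[0, 1]`. -/
def Hminusinv (y : ℝ) : ℝ := sInf {x : ℝ | 0 ≤ x ∧ H x ≤ y}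

/-- The standard normal distribution function. -/
def stdNormalCDF (x : ℝ) : ℝ :=
  ∫ t in Set.Iic x, Real.exp (-t ^ 2 / 2) / Real.sqrt (2 * Real.pi)

/-! ### The toroidal distance -/

/-- The integer translation vector `z`, as an element of Euclidean space. -/
def latticeVec {d : ℕ} (z : Fin d → ℤ) : EuclideanSpace ℝ (Fin d) :=
  (WithLp.equiv 2 (Fin d → ℝ)).symm (fun i => (z i : ℝ))

lemma latticeVec_apply {d : ℕ} (z : Fin d → ℤ) (i : Fin d) : latticeVec z i = (z i : ℝ) := rfl

lemma latticeVec_zero {d : ℕ} : latticeVec (0 : Fin d → ℤ) = 0 := by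
  ext i; simp [latticeVec_apply]

lemma latticeVec_add {d : ℕ} (z w : Fin d → ℤ) :
    latticeVec (z + w) = latticeVec z + latticeVec w := by
  ext i; simp [latticeVec_apply]

lemma torusDist_eq {d : ℕ} (x y : EuclideanSpace ℝ (Fin d)) :
    torusDist x y = ⨅ z : Fin d → ℤ, ‖x - y - latticeVec z‖ := rfl

lemma bddBelow_torusDist {d : ℕ} (x y : EuclideanSpace ℝ (Fin d)) :
    BddBelow (range fun z : Fin d → ℤ => ‖x - y - latticeVec z‖) :=
  ⟨0, by rintro _ ⟨z, rfl⟩; exact norm_nonneg _⟩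

lemma torusDist_nonneg {d : ℕ} (x y : EuclideanSpace ℝ (Fin d)) : 0 ≤ torusDist x y :=
  Real.iInf_nonneg fun _ => norm_nonneg _

lemma torusDist_le {d : ℕ} (x y : EuclideanSpace ℝ (Fin d)) (z : Fin d → ℤ) :
    torusDist x y ≤ ‖x - y - latticeVec z‖ :=
  ciInf_le (bddBelow_torusDist x y) z

lemma le_torusDist {d : ℕ} {x y : EuclideanSpace ℝ (Fin d)} {a : ℝ}
    (h : ∀ z, a ≤ ‖x - y - latticeVec z‖) : a ≤ torusDist x y :=
  le_ciInf h

lemma torusDist_comm {d : ℕ} (x y : EuclideanSpace ℝ (Fin d)) :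
    torusDist x y = torusDist y x := by
  have key : ∀ x y : EuclideanSpace ℝ (Fin d), torusDist x y ≤ torusDist y x := by
    intro x y
    refine le_torusDist fun z => (torusDist_le x y (-z)).trans (le_of_eq ?_)
    rw [← norm_neg]
    congr 1
    ext i
    simp [latticeVec_apply]
    ring
  exact le_antisymm (key x y) (key y x)

lemma torusDist_triangle {d : ℕ} (x y z : EuclideanSpace ℝ (Fin d)) :
    torusDist x z ≤ torusDist x y + torusDist y z := by
  have h : ∀ v w, torusDist x z ≤ ‖x - y - latticeVec v‖ + ‖y - z - latticeVec w‖ := by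
    intro v w
    refine (torusDist_le x z (v + w)).trans ((le_of_eq ?_).trans (norm_add_le _ _))
    rw [latticeVec_add]
    congr 1
    abel
  have h1 : ∀ v, torusDist x z - ‖x - y - latticeVec v‖ ≤ torusDist y z := fun v =>
    le_torusDist fun w => by linarith [h v w]
  have h2 : torusDist x z - torusDist y z ≤ torusDist x y :=
    le_torusDist fun v => by linarith [h1 v]
  linarith

lemma torusDist_sub_latticeVec {d : ℕ} (x y : EuclideanSpace ℝ (Fin d)) (w : Fin d → ℤ) :
    torusDist x (latticeVec w + y) = torusDist x y := by
  have key : ∀ (w : Fin d → ℤ) y, torusDist x (latticeVec w + y) ≤ torusDist x y := by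
    intro w y
    refine le_torusDist fun z => (torusDist_le x _ (z - w)).trans (le_of_eq ?_)
    congr 1
    ext i
    simp [latticeVec_apply]
    ring
  refine le_antisymm (key w y) ?_
  have := key (-w) (latticeVec w + y)
  rwa [← add_assoc, ← latticeVec_add, neg_add_cancel, latticeVec_zero, zero_add] at this

lemma torusDist_add_of_mem_cube {d : ℕ} (x : EuclideanSpace ℝ (Fin d))
    {y : EuclideanSpace ℝ (Fin d)} (hy : y ∈ cube d) : torusDist x (x + y) = ‖y‖ := by
  refine le_antisymm ?_ (le_torusDist fun z => ?_)
  · have := torusDist_le x (x + y) 0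
    simpa [latticeVec_zero] using this
  · rw [EuclideanSpace.norm_eq, EuclideanSpace.norm_eq]
    refine Real.sqrt_le_sqrt (Finset.sum_le_sum fun i _ => ?_)
    have hyi := hy i
    simp only [Real.norm_eq_abs, sq_abs, PiLp.sub_apply, PiLp.add_apply, latticeVec_apply]
    obtain ⟨h1, h2⟩ := hyi
    rcases lt_trichotomy (z i) 0 with h | h | h
    · have : (z i : ℝ) ≤ -1 := by exact_mod_cast Int.le_sub_one_of_lt h
      nlinarith
    · simp [h]
    · have : (1 : ℝ) ≤ z i := by exact_mod_cast h
      nlinarith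

lemma measurable_torusDist {d : ℕ} :
    Measurable fun p : EuclideanSpace ℝ (Fin d) × EuclideanSpace ℝ (Fin d) =>
      torusDist p.1 p.2 := by
  simp only [torusDist_eq]
  exact Measurable.iInf fun z => by fun_prop

lemma measurable_torusDist_right {d : ℕ} (x : EuclideanSpace ℝ (Fin d)) :
    Measurable fun y => torusDist x y := by
  simp only [torusDist_eq]
  exact Measurable.iInf fun z => by fun_prop

lemma measurable_torusDist_comp {d : ℕ} {β : Type*} [MeasurableSpace β]
    {f h : β → EuclideanSpace ℝ (Fin d)} (hf : Measurable f) (hh : Measurable h) :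
    Measurable fun b => torusDist (f b) (h b) := by
  have := measurable_torusDist.comp (hf.prodMk hh)
  exact this

/-! ### Translation invariance on the torus -/

/-- The half-open unit cube with corner `a`. -/
def shiftedCube {d : ℕ} (a : EuclideanSpace ℝ (Fin d)) : Set (EuclideanSpace ℝ (Fin d)) :=
  {x | ∀ i, x i ∈ Set.Ioc (a i) (a i + 1)}

lemma measurableSet_shiftedCube {d : ℕ} (a : EuclideanSpace ℝ (Fin d)) :
    MeasurableSet (shiftedCube a) := by
  have : shiftedCube a = ⋂ i, (fun x : EuclideanSpace ℝ (Fin d) => x i) ⁻¹' Ioc (a i) (a i + 1) := by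
    ext x; simp [shiftedCube]
  rw [this]
  exact MeasurableSet.iInter fun i => measurableSet_preimage (by fun_prop) measurableSet_Ioc

/-- The lattice `ℤ^d` as an additive subgroup of Euclidean space. -/
def lattice (d : ℕ) : AddSubgroup (EuclideanSpace ℝ (Fin d)) :=
  (AddMonoidHom.mk' (latticeVec (d := d)) latticeVec_add).range

instance countable_lattice (d : ℕ) : Countable (lattice d) :=
  Set.countable_range (latticeVec (d := d))

lemma isAddFundamentalDomain_shiftedCube {d : ℕ} (a : EuclideanSpace ℝ (Fin d)) :
    IsAddFundamentalDomain (lattice d) (shiftedCube a) volume := by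
  refine IsAddFundamentalDomain.mk' (measurableSet_shiftedCube a).nullMeasurableSet fun x => ?_
  have h : ∀ i, ∃! m : ℤ, x i + m • (1 : ℝ) ∈ Ioc (a i) (a i + 1) := fun i =>
    existsUnique_add_zsmul_mem_Ioc one_pos (x i) (a i)
  choose m hm hu using h
  refine ⟨⟨latticeVec m, ⟨m, rfl⟩⟩, fun i => ?_, ?_⟩
  · have := hm i
    simpa [AddSubgroup.vadd_def, latticeVec_apply, add_comm] using this
  · rintro ⟨_, ⟨z, rfl⟩⟩ hz
    have : z = m := by
      funext i
      refine hu i (z i) ?_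
      have := hz i
      simpa [AddSubgroup.vadd_def, latticeVec_apply, add_comm] using this
    subst this
    rfl

lemma cube_eq_shiftedCube (d : ℕ) :
    cube d = shiftedCube (WithLp.toLp 2 fun _ : Fin d => (-(1 / 2) : ℝ)) := by
  ext x
  simp only [cube, shiftedCube, mem_ofPred_eq]
  norm_num

lemma measurableSet_cube (d : ℕ) : MeasurableSet (cube d) := by
  rw [cube_eq_shiftedCube]; exact measurableSet_shiftedCube _

lemma add_left_preimage_shiftedCube {d : ℕ} (x a : EuclideanSpace ℝ (Fin d)) :
    (fun y => x + y) ⁻¹' shiftedCube (x + a) = shiftedCube a := by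
  ext y
  simp only [shiftedCube, mem_preimage, mem_ofPred_eq, PiLp.add_apply, mem_Ioc, add_lt_add_iff_left,
    add_assoc, add_le_add_iff_left]

/-- The law of the toroidal distance from a fixed point to a uniform point does not depend on
the fixed point. -/
lemma setLIntegral_torusDist {d : ℕ} (x : EuclideanSpace ℝ (Fin d)) (F : ℝ → ENNReal) :
    ∫⁻ y in cube d, F (torusDist x y) = ∫⁻ y in cube d, F ‖y‖ := by
  set a : EuclideanSpace ℝ (Fin d) := WithLp.toLp 2 fun _ : Fin d => (-(1 / 2) : ℝ) with ha
  have h1 : ∫⁻ y in cube d, F (torusDist x y) = ∫⁻ y in shiftedCube (x + a), F (torusDist x y) := by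
    rw [cube_eq_shiftedCube]
    refine (isAddFundamentalDomain_shiftedCube _).setLIntegral_eq
      (isAddFundamentalDomain_shiftedCube _) _ ?_
    rintro ⟨_, ⟨z, rfl⟩⟩ y
    exact congrArg F (torusDist_sub_latticeVec x y z)
  rw [h1, ← (measurePreserving_add_left volume x).setLIntegral_comp_preimage_emb
    (measurableEmbedding_addLeft x), add_left_preimage_shiftedCube, ← cube_eq_shiftedCube]
  exact setLIntegral_congr_fun (measurableSet_cube d) fun y hy => by
    simp only [torusDist_add_of_mem_cube x hy]

/-! ### The connection function and the connection probability -/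

namespace Model

/-- The connection function, extended to the negative half-line by its value at `0`. -/
def gExt (M : Model d P) (t : ℝ) : ℝ := M.g (max t 0)

/-- The connection probability of two points at scale `r`. -/
def conn (M : Model d P) (r : ℝ) (x y : EuclideanSpace ℝ (Fin d)) : ℝ :=
  M.gExt (torusDist x y / r)

/-- The probability that a given point is connected to an independent uniform point. -/
def connProb (M : Model d P) (r : ℝ) : ℝ := ∫ y in cube d, M.gExt (‖y‖ / r)

lemma gExt_of_nonneg (M : Model d P) {t : ℝ} (ht : 0 ≤ t) : M.gExt t = M.g t := by
  rw [gExt, max_eq_left ht]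

lemma antitone_gExt (M : Model d P) : Antitone M.gExt := fun _ _ h =>
  M.g_antitone (mem_Ici.2 (le_max_right _ _)) (mem_Ici.2 (le_max_right _ _)) (max_le_max_right 0 h)

lemma measurable_gExt (M : Model d P) : Measurable M.gExt := M.antitone_gExt.measurable

lemma gExt_nonneg (M : Model d P) (t : ℝ) : 0 ≤ M.gExt t := (M.g_mem _ (le_max_right _ _)).1

lemma gExt_le_one (M : Model d P) (t : ℝ) : M.gExt t ≤ 1 := (M.g_mem _ (le_max_right _ _)).2

lemma conn_nonneg (M : Model d P) (r : ℝ) (x y : EuclideanSpace ℝ (Fin d)) : 0 ≤ M.conn r x y :=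
  M.gExt_nonneg _

lemma conn_le_one (M : Model d P) (r : ℝ) (x y : EuclideanSpace ℝ (Fin d)) : M.conn r x y ≤ 1 :=
  M.gExt_le_one _

lemma conn_eq (M : Model d P) {r : ℝ} (hr : 0 < r) (x y : EuclideanSpace ℝ (Fin d)) :
    M.conn r x y = M.g (torusDist x y / r) :=
  M.gExt_of_nonneg (div_nonneg (torusDist_nonneg _ _) hr.le)

lemma conn_mono (M : Model d P) {r s : ℝ} (hr : 0 < r) (hrs : r ≤ s)
    (x y : EuclideanSpace ℝ (Fin d)) : M.conn r x y ≤ M.conn s x y :=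
  M.antitone_gExt (div_le_div_of_nonneg_left (torusDist_nonneg _ _) hr hrs)

lemma measurable_conn_comp (M : Model d P) (r : ℝ) {β : Type*} [MeasurableSpace β]
    {f h : β → EuclideanSpace ℝ (Fin d)} (hf : Measurable f) (hh : Measurable h) :
    Measurable fun b => M.conn r (f b) (h b) :=
  M.measurable_gExt.comp ((measurable_torusDist_comp hf hh).div_const r)

lemma isProbabilityMeasure_restrict_cube [IsProbabilityMeasure P] (M : Model d P) :
    IsProbabilityMeasure (volume.restrict (cube d)) := by
  rw [← M.X_unif 1 le_rfl]
  exact Measure.isProbabilityMeasure_map (M.X_meas 1).aemeasurable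

lemma integrable_gExt_comp [IsProbabilityMeasure P] (M : Model d P)
    {f : EuclideanSpace ℝ (Fin d) → ℝ} (hf : Measurable f) :
    Integrable (fun y => M.gExt (f y)) (volume.restrict (cube d)) := by
  have := M.isProbabilityMeasure_restrict_cube
  refine Integrable.of_bound (M.measurable_gExt.comp hf).aestronglyMeasurable 1 ?_
  exact ae_of_all _ fun y => by
    rw [Real.norm_eq_abs, abs_of_nonneg (M.gExt_nonneg _)]; exact M.gExt_le_one _

lemma integrable_conn [IsProbabilityMeasure P] (M : Model d P) (r : ℝ)
    (x : EuclideanSpace ℝ (Fin d)) :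
    Integrable (fun y => M.conn r x y) (volume.restrict (cube d)) :=
  M.integrable_gExt_comp ((measurable_torusDist_right x).div_const r)

lemma setIntegral_conn [IsProbabilityMeasure P] (M : Model d P) (r : ℝ)
    (x : EuclideanSpace ℝ (Fin d)) : ∫ y in cube d, M.conn r x y = M.connProb r := by
  rw [connProb, integral_eq_lintegral_of_nonneg_ae (ae_of_all _ fun y => M.conn_nonneg r x y)
    (M.integrable_conn r x).aestronglyMeasurable,
    integral_eq_lintegral_of_nonneg_ae (ae_of_all _ fun y => M.gExt_nonneg _)
    (M.integrable_gExt_comp (by fun_prop)).aestronglyMeasurable]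
  congr 1
  exact setLIntegral_torusDist x fun t => ENNReal.ofReal (M.gExt (t / r))

lemma connProb_nonneg (M : Model d P) (r : ℝ) : 0 ≤ M.connProb r :=
  integral_nonneg fun _ => M.gExt_nonneg _

lemma connProb_le_one [IsProbabilityMeasure P] (M : Model d P) (r : ℝ) : M.connProb r ≤ 1 := by
  have := M.isProbabilityMeasure_restrict_cube
  calc M.connProb r ≤ ∫ _y in cube d, (1 : ℝ) :=
        integral_mono (M.integrable_gExt_comp (by fun_prop)) (integrable_const _)
          fun y => M.gExt_le_one _
    _ = 1 := by simp

lemma integrable_gExt_norm (M : Model d P) :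
    Integrable fun x : EuclideanSpace ℝ (Fin d) => M.gExt ‖x‖ := by
  simpa only [M.gExt_of_nonneg (norm_nonneg _)] using M.g_integrable

lemma integral_gExt_norm (M : Model d P) :
    ∫ x : EuclideanSpace ℝ (Fin d), M.gExt ‖x‖ = M.α := by
  simpa only [M.gExt_of_nonneg (norm_nonneg _)] using M.α_def.symm

lemma gExt_norm_div (M : Model d P) {r : ℝ} (hr : 0 < r) (y : EuclideanSpace ℝ (Fin d)) :
    M.gExt (‖y‖ / r) = M.gExt ‖r⁻¹ • y‖ := by
  rw [norm_smul, norm_inv, Real.norm_of_nonneg hr.le, div_eq_inv_mul]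

lemma connProb_le [IsProbabilityMeasure P] (M : Model d P) {r : ℝ} (hr : 0 < r) :
    M.connProb r ≤ M.α * r ^ d := by
  have h1 : ∫ y : EuclideanSpace ℝ (Fin d), M.gExt (‖y‖ / r) = M.α * r ^ d := by
    simp only [M.gExt_norm_div hr]
    rw [Measure.integral_comp_inv_smul_of_nonneg volume
      (fun y : EuclideanSpace ℝ (Fin d) => M.gExt ‖y‖) hr.le, M.integral_gExt_norm]
    simp [mul_comm]
  rw [connProb, ← h1]
  refine setIntegral_le_integral ?_ (ae_of_all _ fun y => M.gExt_nonneg _)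
  simp only [M.gExt_norm_div hr]
  exact M.integrable_gExt_norm.comp_smul (inv_ne_zero hr.ne')

lemma ball_subset_cube (d : ℕ) :
    Metric.ball (0 : EuclideanSpace ℝ (Fin d)) (1 / 2) ⊆ cube d := by
  intro y hy i
  have h1 : ‖y i‖ ≤ ‖y‖ := PiLp.norm_apply_le y i
  rw [mem_ball_zero_iff] at hy
  rw [Real.norm_eq_abs] at h1
  have h2 := abs_lt.1 (h1.trans_lt hy)
  exact ⟨h2.1, h2.2.le⟩

open scoped Pointwise in
lemma le_connProb [IsProbabilityMeasure P] (M : Model d P) {r : ℝ} (hr : 0 < r) :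
    r ^ d * ∫ y in Metric.ball (0 : EuclideanSpace ℝ (Fin d)) (r⁻¹ * (1 / 2)), M.gExt ‖y‖ ≤
      M.connProb r := by
  have h1 := Measure.setIntegral_comp_smul_of_pos volume
      (fun y : EuclideanSpace ℝ (Fin d) => M.gExt ‖y‖) (Metric.ball 0 (1 / 2)) (inv_pos.2 hr)
  have h2 : r⁻¹ • Metric.ball (0 : EuclideanSpace ℝ (Fin d)) (1 / 2) =
      Metric.ball 0 (r⁻¹ * (1 / 2)) := by
    rw [smul_ball (inv_pos.2 hr).ne', smul_zero, Real.norm_of_nonneg (inv_pos.2 hr).le]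
  have h3 : r ^ d * ∫ y in Metric.ball (0 : EuclideanSpace ℝ (Fin d)) (r⁻¹ * (1 / 2)),
      M.gExt ‖y‖ = ∫ y in Metric.ball (0 : EuclideanSpace ℝ (Fin d)) (1 / 2), M.gExt (‖y‖ / r) := by
    simp only [M.gExt_norm_div hr]
    rw [h1, h2]
    simp
  rw [h3]
  exact setIntegral_mono_set (M.integrable_gExt_comp (by fun_prop))
    (ae_of_all _ fun y => M.gExt_nonneg _) (ball_subset_cube d).eventuallyLE

lemma eventually_le_connProb [IsProbabilityMeasure P] (M : Model d P) {θ : ℝ} (hθ : θ < 1) :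
    ∀ᶠ r in nhdsWithin (0 : ℝ) (Ioi 0), θ * (M.α * r ^ d) ≤ M.connProb r := by
  have h1 : Tendsto (fun r : ℝ => r⁻¹ * (1 / 2)) (nhdsWithin 0 (Ioi 0)) atTop :=
    tendsto_inv_nhdsGT_zero.atTop_mul_const (by norm_num)
  have h2 := ((aecover_ball (μ := (volume : Measure (EuclideanSpace ℝ (Fin d)))) (x := 0)
    h1).integral_tendsto_of_countably_generated M.integrable_gExt_norm)
  rw [M.integral_gExt_norm] at h2
  have h3 : θ * M.α < M.α := by nlinarith [M.α_pos]
  filter_upwards [h2.eventually_const_lt h3, self_mem_nhdsWithin] with r h4 (h5 : 0 < r)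
  refine le_trans ?_ (M.le_connProb h5)
  have := pow_pos h5 d
  nlinarith

/-! ### Two roots -/

lemma conn_mul_conn_le (M : Model d P) {r : ℝ} (hr : 0 < r) (x x' y : EuclideanSpace ℝ (Fin d)) :
    M.conn r x y * M.conn r x' y ≤
      M.gExt (torusDist x x' / (2 * r)) * (M.conn r x y + M.conn r x' y) := by
  have h1 := M.conn_nonneg r x y
  have h2 := M.conn_nonneg r x' y
  have h3 := M.gExt_nonneg (torusDist x x' / (2 * r))
  have ht := torusDist_triangle x y x'
  rw [torusDist_comm y x'] at ht
  have hdiv : torusDist x x' / (2 * r) = (torusDist x x' / 2) / r := by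
    rw [div_div]
  rcases le_total (torusDist x x' / 2) (torusDist x y) with h | h
  · have : M.conn r x y ≤ M.gExt (torusDist x x' / (2 * r)) := by
      rw [hdiv]
      exact M.antitone_gExt (div_le_div_of_nonneg_right h hr.le)
    nlinarith
  · have : M.conn r x' y ≤ M.gExt (torusDist x x' / (2 * r)) := by
      rw [hdiv]
      exact M.antitone_gExt (div_le_div_of_nonneg_right (by linarith) hr.le)
    nlinarith

lemma lintegral_one_sub_conn [IsProbabilityMeasure P] (M : Model d P) (r : ℝ)
    (x : EuclideanSpace ℝ (Fin d)) :
    ∫⁻ y in cube d, ENNReal.ofReal (1 - M.conn r x y) = ENNReal.ofReal (1 - M.connProb r) := by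
  have := M.isProbabilityMeasure_restrict_cube
  have hinteg : Integrable (fun y => 1 - M.conn r x y) (volume.restrict (cube d)) :=
    (integrable_const 1).sub (M.integrable_conn r x)
  rw [← ofReal_integral_eq_lintegral_ofReal hinteg
    (ae_of_all _ fun y => sub_nonneg.2 (M.conn_le_one r x y)),
    integral_sub (integrable_const 1) (M.integrable_conn r x), M.setIntegral_conn]
  simp

lemma lintegral_one_sub_conn_mul_le [IsProbabilityMeasure P] (M : Model d P) {r : ℝ} (hr : 0 < r)
    (x x' : EuclideanSpace ℝ (Fin d)) :
    ∫⁻ y in cube d, ENNReal.ofReal (1 - M.conn r x y) * ENNReal.ofReal (1 - M.conn r x' y) ≤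
      ENNReal.ofReal ((1 - M.connProb r) ^ 2 +
        2 * M.connProb r * M.gExt (torusDist x x' / (2 * r))) := by
  have := M.isProbabilityMeasure_restrict_cube
  set q := M.gExt (torusDist x x' / (2 * r))
  have hi := M.integrable_conn r x
  have hi' := M.integrable_conn r x'
  have hadd : Integrable (fun y => M.conn r x y + M.conn r x' y) (volume.restrict (cube d)) :=
    hi.add hi'
  have hinteg : Integrable (fun y => 1 - (1 - q) * (M.conn r x y + M.conn r x' y))
      (volume.restrict (cube d)) := (integrable_const 1).sub (hadd.const_mul _)
  have hpt : ∀ y, (1 - M.conn r x y) * (1 - M.conn r x' y) ≤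
      1 - (1 - q) * (M.conn r x y + M.conn r x' y) := fun y => by
    nlinarith [M.conn_mul_conn_le hr x x' y]
  have hnn : ∀ y, 0 ≤ (1 - M.conn r x y) * (1 - M.conn r x' y) := fun y =>
    mul_nonneg (sub_nonneg.2 (M.conn_le_one r x y)) (sub_nonneg.2 (M.conn_le_one r x' y))
  calc _ ≤ ∫⁻ y in cube d, ENNReal.ofReal (1 - (1 - q) * (M.conn r x y + M.conn r x' y)) := by
        refine lintegral_mono fun y => ?_
        rw [← ENNReal.ofReal_mul (sub_nonneg.2 (M.conn_le_one r x y))]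
        exact ENNReal.ofReal_le_ofReal (hpt y)
    _ = ENNReal.ofReal (1 - (1 - q) * (M.connProb r + M.connProb r)) := by
        rw [← ofReal_integral_eq_lintegral_ofReal hinteg
          (ae_of_all _ fun y => (hnn y).trans (hpt y)),
          integral_sub (integrable_const 1) (hadd.const_mul _), integral_const_mul,
          integral_add hi hi', M.setIntegral_conn, M.setIntegral_conn]
        simp
    _ ≤ _ := ENNReal.ofReal_le_ofReal (by nlinarith [sq_nonneg (M.connProb r)])

end Model

lemma volume_torusDist_le {d : ℕ} (x : EuclideanSpace ℝ (Fin d)) {s : ℝ} (hs : 0 ≤ s) :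
    (volume.restrict (cube d)) {y | torusDist x y ≤ s} ≤
      ENNReal.ofReal (s ^ d) * volume (Metric.ball (0 : EuclideanSpace ℝ (Fin d)) 1) := by
  calc _ = ∫⁻ y in cube d, (Iic s).indicator 1 (torusDist x y) := by
        rw [← lintegral_indicator_one (measurableSet_le (measurable_torusDist_right x) measurable_const)]
        rfl
    _ = ∫⁻ y in cube d, (Iic s).indicator 1 ‖y‖ := setLIntegral_torusDist x _
    _ ≤ ∫⁻ y : EuclideanSpace ℝ (Fin d), (Iic s).indicator 1 ‖y‖ := setLIntegral_le_lintegral _ _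
    _ = ∫⁻ y : EuclideanSpace ℝ (Fin d), (Metric.closedBall 0 s).indicator 1 y := by
        congr 1
        ext y
        simp [indicator]
    _ = volume (Metric.closedBall (0 : EuclideanSpace ℝ (Fin d)) s) :=
        lintegral_indicator_one Metric.isClosed_closedBall.measurableSet
    _ = _ := by
        rw [Measure.addHaar_closedBall _ _ hs]
        simp

/-! ### Absence of edges between two disjoint families of vertices -/

namespace Model

/-- The positions, indexed from `0`. -/
def pt (M : Model d P) (i : ℕ) (ω : Ω) : EuclideanSpace ℝ (Fin d) := M.X (i + 1) ω

/-- The edge variables, indexed from `0` and by unordered pairs. -/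
def edgeVar (M : Model d P) (i j : ℕ) (ω : Ω) : ℝ := M.U (min i j + 1) (max i j + 1) ω

/-- There is no edge at scale `r` between the vertices `i` and `j`. -/
def NonAdj (M : Model d P) (r : ℝ) (i j : ℕ) (ω : Ω) : Prop :=
  M.conn r (M.pt i ω) (M.pt j ω) < M.edgeVar i j ω

lemma measurable_pt (M : Model d P) (i : ℕ) : Measurable (M.pt i) := M.X_meas _

lemma map_pt (M : Model d P) (i : ℕ) : Measure.map (M.pt i) P = volume.restrict (cube d) :=
  M.X_unif (i + 1) (by omega)

lemma measurable_edgeVar (M : Model d P) (i j : ℕ) : Measurable (M.edgeVar i j) := M.U_meas _ _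

lemma measurableSet_nonAdj (M : Model d P) (r : ℝ) (i j : ℕ) :
    MeasurableSet {ω | M.NonAdj r i j ω} :=
  measurableSet_lt (M.measurable_conn_comp r (M.measurable_pt i) (M.measurable_pt j))
    (M.measurable_edgeVar i j)

lemma iIndepFun_pt (M : Model d P) : iIndepFun M.pt P :=
  M.X_indep.precomp (g := fun i : ℕ => (⟨i + 1, by omega⟩ : {i : ℕ // 1 ≤ i}))
    fun i j h => by simpa using h

lemma measure_lt_edgeVar (M : Model d P) {i j : ℕ} (hij : i ≠ j) {a : ℝ} (ha : 0 ≤ a) :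
    P (M.edgeVar i j ⁻¹' Ioi a) = ENNReal.ofReal (1 - a) := by
  rw [← Measure.map_apply (M.measurable_edgeVar i j) measurableSet_Ioi,
    show M.edgeVar i j = M.U (min i j + 1) (max i j + 1) from rfl,
    M.U_unif _ _ (by omega) (by omega), Measure.restrict_apply measurableSet_Ioi,
    show Ioi a ∩ Icc 0 1 = Ioc a 1 by
      ext x
      simp only [mem_inter_iff, mem_Ioi, mem_Icc, mem_Ioc]
      exact ⟨fun h => ⟨h.1, h.2.2⟩, fun h => ⟨h.1, ha.trans h.1.le, h.2⟩⟩, Real.volume_Ioc]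

lemma measure_forall_lt_edgeVar (M : Model d P) {T K : Finset ℕ} (hTK : Disjoint T K)
    {a : ℕ → ℕ → ℝ} (ha : ∀ t k, 0 ≤ a t k) :
    P {ω | ∀ t ∈ T, ∀ k ∈ K, a t k < M.edgeVar t k ω} =
      ∏ k ∈ K, ∏ t ∈ T, ENNReal.ofReal (1 - a t k) := by
  have hne : ∀ p : ↥(K ×ˢ T), p.1.2 ≠ p.1.1 := fun p =>
    Finset.disjoint_iff_ne.1 hTK _ (Finset.mem_product.1 p.2).2 _ (Finset.mem_product.1 p.2).1
  have hcross : ∀ p q : ↥(K ×ˢ T), p.1.2 ≠ q.1.1 := fun p q =>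
    Finset.disjoint_iff_ne.1 hTK _ (Finset.mem_product.1 p.2).2 _ (Finset.mem_product.1 q.2).1
  have hind : iIndepFun (fun p : ↥(K ×ˢ T) => M.edgeVar p.1.2 p.1.1) P := by
    refine M.U_indep.precomp (g := fun p : ↥(K ×ˢ T) =>
      (⟨(min p.1.2 p.1.1 + 1, max p.1.2 p.1.1 + 1), ?_⟩ :
        {p : ℕ × ℕ // 1 ≤ p.1 ∧ p.1 < p.2})) ?_
    · have := hne p
      constructor <;> dsimp only <;> omega
    · intro p q h
      have h1 := hcross p q
      have h2 := hcross q p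
      simp only [Subtype.mk.injEq, Prod.mk.injEq] at h
      ext <;> omega
  have h := hind.measure_inter_preimage_eq_mul Finset.univ
    (sets := fun p => Ioi (a p.1.2 p.1.1)) fun _ _ => measurableSet_Ioi
  rw [show {ω | ∀ t ∈ T, ∀ k ∈ K, a t k < M.edgeVar t k ω} =
    ⋂ p ∈ (Finset.univ : Finset ↥(K ×ˢ T)), M.edgeVar p.1.2 p.1.1 ⁻¹' Ioi (a p.1.2 p.1.1) by
      ext ω
      simp only [mem_ofPred_eq, Finset.mem_univ, iInter_true, mem_iInter, mem_preimage, mem_Ioi,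
        Subtype.forall, Finset.mem_product, Prod.forall]
      exact ⟨fun h k t hk => h t hk.2 k hk.1, fun h t ht k hk => h k t ⟨hk, ht⟩⟩, h,
    ← Finset.prod_product']
  rw [← Finset.prod_coe_sort (K ×ˢ T)]
  exact Finset.prod_congr rfl fun p _ => M.measure_lt_edgeVar (hne p) (ha _ _)

lemma indepFun_X_U (M : Model d P) :
    IndepFun (fun ω => fun i : ℕ => M.X i ω) (fun ω => fun p : ℕ × ℕ => M.U p.1 p.2 ω) P :=
  M.families_indep.indep (i := 0) (j := 2) (by decide)

lemma measure_forall_nonAdj_eq_lintegral [IsProbabilityMeasure P] (M : Model d P)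
    {T K : Finset ℕ} (hTK : Disjoint T K) (r : ℝ) :
    P {ω | ∀ t ∈ T, ∀ k ∈ K, M.NonAdj r t k ω} =
      ∫⁻ ω, ∏ k ∈ K, ∏ t ∈ T, ENNReal.ofReal (1 - M.conn r (M.pt t ω) (M.pt k ω)) ∂P := by
  have hX : Measurable fun ω => fun i : ℕ => M.X i ω := measurable_pi_lambda _ M.X_meas
  have hU : Measurable fun ω => fun p : ℕ × ℕ => M.U p.1 p.2 ω :=
    measurable_pi_lambda _ fun p => M.U_meas p.1 p.2
  have hlaw := M.indepFun_X_U.map_prod_eq_prod_map_map hX.aemeasurable hU.aemeasurable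
  set S : Set ((ℕ → EuclideanSpace ℝ (Fin d)) × (ℕ × ℕ → ℝ)) :=
    {q | ∀ t ∈ T, ∀ k ∈ K, M.conn r (q.1 (t + 1)) (q.1 (k + 1)) < q.2 (min t k + 1, max t k + 1)}
    with hS
  have hSm : MeasurableSet S := by
    have : S = ⋂ t ∈ T, ⋂ k ∈ K, {q | M.conn r (q.1 (t + 1)) (q.1 (k + 1)) <
        q.2 (min t k + 1, max t k + 1)} := by
      ext q; simp [hS]
    rw [this]
    refine Finset.measurableSet_biInter _ fun t _ => Finset.measurableSet_biInter _ fun k _ => ?_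
    exact measurableSet_lt (M.measurable_conn_comp r (by fun_prop) (by fun_prop)) (by fun_prop)
  have h1 : P {ω | ∀ t ∈ T, ∀ k ∈ K, M.NonAdj r t k ω} =
      (Measure.map (fun ω => (fun i : ℕ => M.X i ω, fun p : ℕ × ℕ => M.U p.1 p.2 ω)) P) S := by
    rw [Measure.map_apply (hX.prodMk hU) hSm]
    rfl
  have : IsProbabilityMeasure (Measure.map (fun ω => fun p : ℕ × ℕ => M.U p.1 p.2 ω) P) :=
    Measure.isProbabilityMeasure_map hU.aemeasurable
  rw [h1, hlaw, Measure.prod_apply hSm,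
    lintegral_map (measurable_measure_prodMk_left hSm) hX]
  refine lintegral_congr fun ω => ?_
  rw [Measure.map_apply hU (measurable_prodMk_left hSm)]
  exact M.measure_forall_lt_edgeVar hTK
    (a := fun t k => M.conn r (M.pt t ω) (M.pt k ω)) fun t k => M.conn_nonneg r _ _

lemma lintegral_prod_pt [IsProbabilityMeasure P] (M : Model d P) {T K : Finset ℕ}
    (hTK : Disjoint T K) {Φ : (T → EuclideanSpace ℝ (Fin d)) → EuclideanSpace ℝ (Fin d) → ENNReal}
    (hΦ : Measurable (Function.uncurry Φ)) :
    ∫⁻ ω, ∏ k ∈ K, Φ (fun t => M.pt t ω) (M.pt k ω) ∂P =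
      ∫⁻ ω, (∫⁻ y in cube d, Φ (fun t => M.pt t ω) y) ^ K.card ∂P := by
  have hT : Measurable fun ω => fun t : T => M.pt t ω :=
    measurable_pi_lambda _ fun t => M.measurable_pt t
  have hK : Measurable fun ω => fun k : K => M.pt k ω :=
    measurable_pi_lambda _ fun k => M.measurable_pt k
  have hlaw := (M.iIndepFun_pt.indepFun_finset T K hTK M.measurable_pt).map_prod_eq_prod_map_map
    hT.aemeasurable hK.aemeasurable
  have hF : Measurable fun q : (T → EuclideanSpace ℝ (Fin d)) × (K → EuclideanSpace ℝ (Fin d)) =>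
      ∏ k : K, Φ q.1 (q.2 k) :=
    Finset.measurable_prod _ fun k _ => hΦ.comp (by fun_prop :
      Measurable fun q : (T → EuclideanSpace ℝ (Fin d)) × (K → EuclideanSpace ℝ (Fin d)) =>
        (q.1, q.2 k))
  have : IsProbabilityMeasure (Measure.map (fun ω => fun k : K => M.pt k ω) P) :=
    Measure.isProbabilityMeasure_map hK.aemeasurable
  calc _ = ∫⁻ q, ∏ k : K, Φ q.1 (q.2 k) ∂(Measure.map (fun ω => (fun t : T => M.pt t ω,
          fun k : K => M.pt k ω)) P) := by
        rw [lintegral_map hF (hT.prodMk hK)]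
        refine lintegral_congr fun ω => ?_
        exact (Finset.prod_coe_sort K fun k => Φ (fun t => M.pt t ω) (M.pt k ω)).symm
    _ = _ := by
        rw [hlaw, lintegral_prod _ hF.aemeasurable, lintegral_map hF.lintegral_prod_right' hT]
        refine lintegral_congr fun ω => ?_
        set x : T → EuclideanSpace ℝ (Fin d) := fun t => M.pt t ω
        have hx : Measurable (Φ x) := hΦ.comp measurable_prodMk_left
        have hxK : Measurable fun y : K → EuclideanSpace ℝ (Fin d) => ∏ k : K, Φ x (y k) :=
          Finset.measurable_prod _ fun k _ => hx.comp (measurable_pi_apply k)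
        rw [lintegral_map hxK hK]
        have h1 := lintegral_prod_eq_prod_lintegral_of_indepFun K (fun k ω' => Φ x (M.pt k ω'))
          (M.iIndepFun_pt.comp (fun _ => Φ x) fun _ => hx) fun k => hx.comp (M.measurable_pt k)
        have h2 : ∀ k, ∫⁻ ω', Φ x (M.pt k ω') ∂P = ∫⁻ y in cube d, Φ x y := fun k => by
          rw [← M.map_pt k, lintegral_map hx (M.measurable_pt k)]
        simp only [h2, Finset.prod_const] at h1
        rw [← h1]
        exact lintegral_congr fun ω' => Finset.prod_coe_sort K fun k => Φ x (M.pt k ω')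

/-- The probability that there is no edge between two disjoint families of vertices. -/
lemma measure_forall_nonAdj [IsProbabilityMeasure P] (M : Model d P)
    {T K : Finset ℕ} (hTK : Disjoint T K) (r : ℝ) :
    P {ω | ∀ t ∈ T, ∀ k ∈ K, M.NonAdj r t k ω} =
      ∫⁻ ω, (∫⁻ y in cube d, ∏ t ∈ T, ENNReal.ofReal (1 - M.conn r (M.pt t ω) y)) ^ K.card ∂P := by
  rw [M.measure_forall_nonAdj_eq_lintegral hTK]
  have h := M.lintegral_prod_pt hTK
    (Φ := fun x y => ∏ t : T, ENNReal.ofReal (1 - M.conn r (x t) y)) (by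
      refine Finset.measurable_prod _ fun t _ => ENNReal.measurable_ofReal.comp
        (measurable_const.sub ?_)
      exact M.measurable_conn_comp r (by fun_prop) (by fun_prop))
  have hp : ∀ ω y, ∏ t : T, ENNReal.ofReal (1 - M.conn r (M.pt t ω) y) =
      ∏ t ∈ T, ENNReal.ofReal (1 - M.conn r (M.pt t ω) y) := fun ω y =>
    Finset.prod_coe_sort T fun t => ENNReal.ofReal (1 - M.conn r (M.pt t ω) y)
  simpa only [hp] using h

/-- The probability that a vertex is not adjacent to any of the vertices in `K`. -/
lemma measure_forall_nonAdj_single [IsProbabilityMeasure P] (M : Model d P)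
    {i : ℕ} {K : Finset ℕ} (hi : i ∉ K) (r : ℝ) :
    P {ω | ∀ k ∈ K, M.NonAdj r i k ω} = ENNReal.ofReal ((1 - M.connProb r) ^ K.card) := by
  have h := M.measure_forall_nonAdj (T := {i}) (K := K) (by simpa using hi) r
  simp only [Finset.mem_singleton, forall_eq, Finset.prod_singleton,
    M.lintegral_one_sub_conn, lintegral_const, measure_univ, mul_one] at h
  rw [h, ENNReal.ofReal_pow (sub_nonneg.2 (M.connProb_le_one r))]

lemma measure_torusDist_pt_le [IsProbabilityMeasure P] (M : Model d P) {i j : ℕ} (hij : i ≠ j)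
    {s : ℝ} (hs : 0 ≤ s) :
    P {ω | torusDist (M.pt i ω) (M.pt j ω) ≤ s} ≤
      ENNReal.ofReal (s ^ d) * volume (Metric.ball (0 : EuclideanSpace ℝ (Fin d)) 1) := by
  have := M.isProbabilityMeasure_restrict_cube
  have hlaw := (M.iIndepFun_pt.indepFun hij).map_prod_eq_prod_map_map
    (M.measurable_pt i).aemeasurable (M.measurable_pt j).aemeasurable
  have hS : MeasurableSet {q : EuclideanSpace ℝ (Fin d) × EuclideanSpace ℝ (Fin d) |
      torusDist q.1 q.2 ≤ s} := measurableSet_le measurable_torusDist measurable_const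
  have h1 : P {ω | torusDist (M.pt i ω) (M.pt j ω) ≤ s} =
      Measure.map (fun ω => (M.pt i ω, M.pt j ω)) P {q | torusDist q.1 q.2 ≤ s} := by
    rw [Measure.map_apply ((M.measurable_pt i).prodMk (M.measurable_pt j)) hS]
    rfl
  rw [h1, hlaw, M.map_pt, M.map_pt, Measure.prod_apply hS]
  calc _ ≤ ∫⁻ _x in cube d, ENNReal.ofReal (s ^ d) *
        volume (Metric.ball (0 : EuclideanSpace ℝ (Fin d)) 1) :=
        lintegral_mono fun x => volume_torusDist_le x hs
    _ = _ := by simp only [lintegral_const, measure_univ, mul_one]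

/-- A bound for the probability that two vertices are not adjacent to any of the vertices
in `K`. -/
lemma measure_forall_nonAdj_pair_le [IsProbabilityMeasure P] (M : Model d P)
    {i j : ℕ} (hij : i ≠ j) {K : Finset ℕ} (hi : i ∉ K) (hj : j ∉ K) {r s : ℝ} (hr : 0 < r)
    (hs : 0 ≤ s) :
    P {ω | ∀ k ∈ K, M.NonAdj r i k ω ∧ M.NonAdj r j k ω} ≤
      ENNReal.ofReal ((1 - M.connProb r) ^ K.card * (s ^ d *
        (volume (Metric.ball (0 : EuclideanSpace ℝ (Fin d)) 1)).toReal)) +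
      ENNReal.ofReal (((1 - M.connProb r) ^ 2 +
        2 * M.connProb r * M.gExt (s / (2 * r))) ^ K.card) := by
  have h := M.measure_forall_nonAdj (T := {i, j}) (K := K) (by simp [hi, hj]) r
  simp only [Finset.mem_insert, Finset.mem_singleton, forall_eq_or_imp, forall_eq,
    Finset.prod_pair hij, ← forall_and] at h
  have hq := sub_nonneg.2 (M.connProb_le_one r)
  have hp := M.connProb_nonneg r
  have hS : MeasurableSet {ω | torusDist (M.pt i ω) (M.pt j ω) ≤ s} :=
    measurableSet_le (measurable_torusDist_comp (M.measurable_pt i) (M.measurable_pt j))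
      measurable_const
  have hpt : ∀ ω, (∫⁻ y in cube d, ENNReal.ofReal (1 - M.conn r (M.pt i ω) y) *
      ENNReal.ofReal (1 - M.conn r (M.pt j ω) y)) ^ K.card ≤
      {ω | torusDist (M.pt i ω) (M.pt j ω) ≤ s}.indicator
        (fun _ => ENNReal.ofReal ((1 - M.connProb r) ^ K.card)) ω +
      ENNReal.ofReal (((1 - M.connProb r) ^ 2 +
        2 * M.connProb r * M.gExt (s / (2 * r))) ^ K.card) := by
    intro ω
    by_cases hω : torusDist (M.pt i ω) (M.pt j ω) ≤ s
    · rw [indicator_of_mem (show ω ∈ {ω | torusDist (M.pt i ω) (M.pt j ω) ≤ s} from hω)]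
      refine le_add_right ?_
      rw [ENNReal.ofReal_pow hq, ← M.lintegral_one_sub_conn r (M.pt i ω)]
      gcongr with y
      refine (mul_le_mul_right (ENNReal.ofReal_le_ofReal
        (sub_le_self 1 (M.conn_nonneg r (M.pt j ω) y))) _).trans ?_
      simp
    · refine le_add_left ?_
      have hg := M.gExt_nonneg (s / (2 * r))
      rw [ENNReal.ofReal_pow (by positivity)]
      gcongr
      refine (M.lintegral_one_sub_conn_mul_le hr _ _).trans (ENNReal.ofReal_le_ofReal ?_)
      have : M.gExt (torusDist (M.pt i ω) (M.pt j ω) / (2 * r)) ≤ M.gExt (s / (2 * r)) :=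
        M.antitone_gExt (div_le_div_of_nonneg_right (not_le.1 hω).le (by positivity))
      gcongr
  rw [h]
  refine (lintegral_mono hpt).trans ?_
  rw [lintegral_add_right _ measurable_const, lintegral_indicator hS, lintegral_const,
    lintegral_const, Measure.restrict_apply_univ, measure_univ, mul_one,
    ENNReal.ofReal_mul (pow_nonneg hq _), ENNReal.ofReal_mul (pow_nonneg hs _),
    ENNReal.ofReal_toReal measure_ball_lt_top.ne]
  gcongr
  exact M.measure_torusDist_pt_le hij hs

end Model

/-! ### Moment bounds for the number of isolated vertices -/

/-- A second moment bound for the probability that none of finitely many events occurs. -/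
lemma measureReal_forall_notMem_le [IsProbabilityMeasure P] {m : ℕ} (hm : 0 < m)
    {E : ℕ → Set Ω} (hE : ∀ i, MeasurableSet (E i)) {q v : ℝ} (hq : 0 < q) (hv : 0 ≤ v)
    (h1 : ∀ i < m, P.real (E i) = q)
    (h2 : ∀ i < m, ∀ j < m, i ≠ j → P.real (E i ∩ E j) ≤ v) :
    P.real {ω | ∀ i < m, ω ∉ E i} ≤ 1 / (m * q) + v / q ^ 2 - 1 := by
  have hm' : (0 : ℝ) < m := by exact_mod_cast hm
  set W : Ω → ℝ := fun ω => ∑ i ∈ Finset.range m, (E i).indicator 1 ω with hW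
  have hind : ∀ S : Set Ω, MeasurableSet S → Integrable (S.indicator (1 : Ω → ℝ)) P := fun S hS =>
    (integrable_const (1 : ℝ)).indicator hS
  have hWint : Integrable W P := integrable_finsetSum _ fun i _ => hind _ (hE i)
  have hsq : ∀ ω, W ω ^ 2 = ∑ i ∈ Finset.range m, ∑ j ∈ Finset.range m,
      (E i ∩ E j).indicator (1 : Ω → ℝ) ω := fun ω => by
    rw [hW, sq, Finset.sum_mul_sum]
    refine Finset.sum_congr rfl fun i _ => Finset.sum_congr rfl fun j _ => ?_
    rw [inter_indicator_one]
    rfl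
  have hW2int : Integrable (fun ω => W ω ^ 2) P := by
    simp only [hsq]
    exact integrable_finsetSum _ fun i _ => integrable_finsetSum _ fun j _ =>
      hind _ ((hE i).inter (hE j))
  have hEW : ∫ ω, W ω ∂P = m * q := by
    rw [hW, integral_finsetSum _ fun i _ => hind _ (hE i)]
    rw [Finset.sum_congr rfl fun i hi => (integral_indicator_one (hE i)).trans
      (h1 i (Finset.mem_range.1 hi))]
    simp
  have hEW2 : ∫ ω, W ω ^ 2 ∂P ≤ m * q + m ^ 2 * v := by
    simp only [hsq]
    rw [integral_finsetSum _ fun i _ => integrable_finsetSum _ fun j _ =>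
      hind _ ((hE i).inter (hE j))]
    calc _ ≤ ∑ i ∈ Finset.range m, (q + m * v) := Finset.sum_le_sum fun i hi => ?_
      _ = m * q + m ^ 2 * v := by simp; ring
    rw [integral_finsetSum _ fun j _ => hind _ ((hE i).inter (hE j))]
    calc _ ≤ ∑ j ∈ Finset.range m, ((if i = j then q else 0) + v) :=
          Finset.sum_le_sum fun j hj => ?_
      _ = q + m * v := by
          rw [Finset.sum_add_distrib, Finset.sum_ite_eq, if_pos hi]; simp
    rw [integral_indicator_one ((hE i).inter (hE j))]
    split_ifs with hij
    · subst hij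
      rw [inter_self, h1 i (Finset.mem_range.1 hi)]
      linarith
    · rw [zero_add]
      exact h2 i (Finset.mem_range.1 hi) j (Finset.mem_range.1 hj) hij
  have hmarkov := mul_meas_ge_le_integral_of_nonneg (μ := P) (f := fun ω => (W ω - m * q) ^ 2)
    (ae_of_all _ fun ω => sq_nonneg _) (by
      have : (fun ω => (W ω - m * q) ^ 2) = fun ω => W ω ^ 2 - 2 * (m * q) * W ω + (m * q) ^ 2 := by
        ext ω; ring
      rw [this]
      exact (hW2int.sub (hWint.const_mul _)).add (integrable_const _)) ((m * q) ^ 2)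
  have hinteg : ∫ ω, (W ω - m * q) ^ 2 ∂P ≤ m * q + m ^ 2 * v - (m * q) ^ 2 := by
    have : ∀ ω, (W ω - m * q) ^ 2 = W ω ^ 2 - 2 * (m * q) * W ω + (m * q) ^ 2 := fun ω => by ring
    simp only [this]
    have hA : Integrable (fun ω => W ω ^ 2 - 2 * (m * q) * W ω) P :=
      hW2int.sub (hWint.const_mul _)
    rw [integral_add hA (integrable_const _),
      integral_sub hW2int (hWint.const_mul _), integral_const_mul, hEW]
    simp only [integral_const, probReal_univ, smul_eq_mul, one_mul]
    linarith
  have hsub : P.real {ω | ∀ i < m, ω ∉ E i} ≤ P.real {ω | (m * q) ^ 2 ≤ (W ω - m * q) ^ 2} := by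
    refine measureReal_mono fun ω hω => ?_
    have : W ω = 0 := Finset.sum_eq_zero fun i hi =>
      indicator_of_notMem (hω i (Finset.mem_range.1 hi)) _
    simp [this]
  have hpos : 0 < (m * q) ^ 2 := by positivity
  have hfin : (m * q) ^ 2 * P.real {ω | ∀ i < m, ω ∉ E i} ≤ m * q + m ^ 2 * v - (m * q) ^ 2 :=
    ((mul_le_mul_of_nonneg_left hsub hpos.le).trans hmarkov).trans hinteg
  rw [mul_comm, ← le_div_iff₀ hpos] at hfin
  refine hfin.trans (le_of_eq ?_)
  field_simp

namespace Model

/-- The event that vertex `i` has no neighbour among the first `m` vertices. -/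
def isolatedIn (M : Model d P) (r : ℝ) (m i : ℕ) : Set Ω :=
  {ω | ∀ k ∈ (Finset.range m).erase i, M.NonAdj r i k ω}

lemma measurableSet_isolatedIn (M : Model d P) (r : ℝ) (m i : ℕ) :
    MeasurableSet (M.isolatedIn r m i) := by
  have : M.isolatedIn r m i = ⋂ k ∈ (Finset.range m).erase i, {ω | M.NonAdj r i k ω} := by
    ext ω; simp [isolatedIn]
  rw [this]
  exact Finset.measurableSet_biInter _ fun k _ => M.measurableSet_nonAdj r i k

lemma measureReal_isolatedIn [IsProbabilityMeasure P] (M : Model d P) (r : ℝ) (m i : ℕ) :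
    P.real (M.isolatedIn r m i) = (1 - M.connProb r) ^ ((Finset.range m).erase i).card := by
  rw [Measure.real, isolatedIn, M.measure_forall_nonAdj_single (Finset.notMem_erase i _),
    ENNReal.toReal_ofReal (pow_nonneg (sub_nonneg.2 (M.connProb_le_one r)) _)]

/-- First moment bound. -/
lemma measureReal_exists_isolatedIn_le [IsProbabilityMeasure P] (M : Model d P) (r : ℝ)
    (m₁ m₂ : ℕ) :
    P.real {ω | ∃ i < m₂, ω ∈ M.isolatedIn r m₁ i} ≤
      m₂ * Real.exp (-(M.connProb r * (m₁ - 1))) := by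
  have hq := sub_nonneg.2 (M.connProb_le_one r)
  have hset : {ω | ∃ i < m₂, ω ∈ M.isolatedIn r m₁ i} =
      ⋃ i ∈ Finset.range m₂, M.isolatedIn r m₁ i := by
    ext ω; simp
  have h1 : ∀ i, P.real (M.isolatedIn r m₁ i) ≤ Real.exp (-(M.connProb r * (m₁ - 1))) := by
    intro i
    rw [M.measureReal_isolatedIn]
    have hc : ((m₁ : ℝ) - 1) ≤ ((Finset.range m₁).erase i).card := by
      have := Finset.pred_card_le_card_erase (s := Finset.range m₁) (a := i)
      rw [Finset.card_range] at this
      have h' : m₁ ≤ ((Finset.range m₁).erase i).card + 1 := by omega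
      have h'' : (m₁ : ℝ) ≤ ((Finset.range m₁).erase i).card + 1 := by exact_mod_cast h'
      linarith
    calc _ ≤ Real.exp (-M.connProb r) ^ ((Finset.range m₁).erase i).card :=
          pow_le_pow_left₀ hq (Real.one_sub_le_exp_neg _) _
      _ = Real.exp (-(M.connProb r * ((Finset.range m₁).erase i).card)) := by
          rw [← Real.exp_nat_mul]; congr 1; ring
      _ ≤ _ := by
          refine Real.exp_le_exp.2 (neg_le_neg ?_)
          exact mul_le_mul_of_nonneg_left hc (M.connProb_nonneg r)
  rw [hset]
  refine (measureReal_biUnion_finset_le _ _).trans ((Finset.sum_le_sum fun i _ => h1 i).trans ?_)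
  simp

lemma inv_one_sub_pow_le_exp {p : ℝ} (hp : p < 1) (m : ℕ) :
    ((1 - p) ^ m)⁻¹ ≤ Real.exp (m * (p / (1 - p))) := by
  have h : 0 < 1 - p := by linarith
  rw [← inv_pow, Real.exp_nat_mul]
  refine pow_le_pow_left₀ (inv_nonneg.2 h.le) ?_ m
  have : (1 - p)⁻¹ = p / (1 - p) + 1 := by field_simp; ring
  rw [this]
  exact Real.add_one_le_exp _

/-- Second moment bound. -/
lemma measureReal_forall_notMem_isolatedIn_le [IsProbabilityMeasure P] (M : Model d P)
    {r s : ℝ} (hr : 0 < r) (hs : 0 ≤ s) {m₁ m₂ : ℕ} (hm₁ : 0 < m₁) (hm : m₁ ≤ m₂) (hm₂ : 2 ≤ m₂)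
    (hp : M.connProb r ≤ 1 / 2) :
    P.real {ω | ∀ i < m₁, ω ∉ M.isolatedIn r m₂ i} ≤
      Real.exp (m₂ * (M.connProb r / (1 - M.connProb r))) / m₁ +
      (volume (Metric.ball (0 : EuclideanSpace ℝ (Fin d)) 1)).toReal * s ^ d *
        Real.exp (m₂ * (M.connProb r / (1 - M.connProb r))) +
      (Real.exp (4 * M.connProb r + 8 * m₂ * M.gExt (s / (2 * r))) - 1) := by
  set p := M.connProb r
  set κ := (volume (Metric.ball (0 : EuclideanSpace ℝ (Fin d)) 1)).toReal
  set η := 2 * p * M.gExt (s / (2 * r)) with hη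
  have hp0 : 0 ≤ p := M.connProb_nonneg r
  have hg := M.gExt_nonneg (s / (2 * r))
  have hκ : 0 ≤ κ := ENNReal.toReal_nonneg
  have hη0 : 0 ≤ η := by positivity
  have hq : 0 < 1 - p := by linarith
  obtain ⟨k, rfl⟩ : ∃ k, m₂ = k + 2 := ⟨m₂ - 2, by omega⟩
  have hm₁' : (0 : ℝ) < m₁ := by exact_mod_cast hm₁
  have key := measureReal_forall_notMem_le (P := P) hm₁ (E := M.isolatedIn r (k + 2))
    (M.measurableSet_isolatedIn r (k + 2)) (q := (1 - p) ^ (k + 1))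
    (v := (1 - p) ^ k * (s ^ d * κ) + ((1 - p) ^ 2 + η) ^ k) (by positivity) (by positivity)
    (fun i hi => by
      rw [M.measureReal_isolatedIn, Finset.card_erase_of_mem (Finset.mem_range.2 (hi.trans_le hm)),
        Finset.card_range]
      rfl)
    (fun i hi j hj hij => by
      have hcard : (((Finset.range (k + 2)).erase i).erase j).card = k := by
        rw [Finset.card_erase_of_mem, Finset.card_erase_of_mem, Finset.card_range]
        · rfl
        · exact Finset.mem_range.2 (hi.trans_le hm)
        · exact Finset.mem_erase.2 ⟨hij.symm, Finset.mem_range.2 (hj.trans_le hm)⟩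
      have h := M.measure_forall_nonAdj_pair_le hij
        (K := ((Finset.range (k + 2)).erase i).erase j) (by simp) (by simp) hr hs
      rw [hcard, ← ENNReal.ofReal_add (by positivity) (by positivity)] at h
      refine ENNReal.toReal_le_of_le_ofReal (by positivity) ((measure_mono ?_).trans h)
      rintro ω ⟨h1, h2⟩ l hl
      simp only [Finset.mem_erase] at hl
      exact ⟨h1 l (Finset.mem_erase.2 hl.2), h2 l (Finset.mem_erase.2 ⟨hl.1, hl.2.2⟩)⟩)
  have hQ := inv_one_sub_pow_le_exp (p := p) (by linarith) (k + 2)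
  set Q := Real.exp ((k + 2 : ℕ) * (p / (1 - p)))
  have t1 : 1 / (m₁ * (1 - p) ^ (k + 1)) ≤ Q / m₁ := by
    have : ((1 - p) ^ (k + 1))⁻¹ ≤ Q := by
      refine le_trans ?_ hQ
      exact inv_anti₀ (by positivity)
        (pow_le_pow_of_le_one hq.le (by linarith) (by omega))
    calc 1 / (m₁ * (1 - p) ^ (k + 1)) = ((1 - p) ^ (k + 1))⁻¹ / m₁ := by field_simp
      _ ≤ Q / m₁ := by gcongr
  have t2 : (1 - p) ^ k * (s ^ d * κ) / ((1 - p) ^ (k + 1)) ^ 2 ≤ κ * s ^ d * Q := by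
    calc _ = κ * s ^ d * ((1 - p) ^ (k + 2))⁻¹ := by field_simp; ring
      _ ≤ _ := by gcongr
  have hinv : ((1 - p) ^ 2)⁻¹ ≤ Real.exp (4 * p) := by
    refine (inv_one_sub_pow_le_exp (p := p) (by linarith) 2).trans (Real.exp_le_exp.2 ?_)
    have : p / (1 - p) ≤ 2 * p := by
      rw [div_le_iff₀ hq]; nlinarith
    push_cast
    linarith
  have t3 : ((1 - p) ^ 2 + η) ^ k / ((1 - p) ^ (k + 1)) ^ 2 ≤
      Real.exp (4 * p + 8 * (k + 2 : ℕ) * M.gExt (s / (2 * r))) := by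
    have e1 : ((1 - p) ^ 2 + η) ^ k / ((1 - p) ^ (k + 1)) ^ 2 =
        ((1 - p) ^ 2)⁻¹ * (1 + η * ((1 - p) ^ 2)⁻¹) ^ k := by
      have : (1 - p) ^ 2 + η = (1 - p) ^ 2 * (1 + η * ((1 - p) ^ 2)⁻¹) := by field_simp
      rw [this, mul_pow, ← pow_mul, ← pow_mul]
      field_simp
      ring
    have e2 : ((1 - p) ^ 2)⁻¹ ≤ 4 := by
      rw [inv_le_comm₀ (by positivity) (by norm_num)]; nlinarith
    have e3 : η * ((1 - p) ^ 2)⁻¹ ≤ 4 * M.gExt (s / (2 * r)) := by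
      have : η ≤ M.gExt (s / (2 * r)) := by rw [hη]; nlinarith
      nlinarith [mul_le_mul this e2 (by positivity) hg]
    have e4 : (1 + η * ((1 - p) ^ 2)⁻¹) ^ k ≤ Real.exp (k * (4 * M.gExt (s / (2 * r)))) := by
      rw [Real.exp_nat_mul]
      refine pow_le_pow_left₀ (by positivity) ?_ k
      linarith [Real.add_one_le_exp (4 * M.gExt (s / (2 * r)))]
    rw [e1, Real.exp_add]
    refine mul_le_mul hinv (e4.trans (Real.exp_le_exp.2 ?_)) (by positivity) (by positivity)
    push_cast
    nlinarith [mul_nonneg (Nat.cast_nonneg (α := ℝ) k) hg]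
  rw [add_div] at key
  linarith

/-! ### The critical radius -/

lemma isolatedCount_eq_zero_iff (M : Model d P) (n : ℕ) {r : ℝ} (hr : 0 < r) (ω : Ω) :
    isolatedCount M n r ω = 0 ↔ ∀ i < M.N n ω, ω ∉ M.isolatedIn r (M.N n ω) i := by
  have hfin : {i : ℕ | 1 ≤ i ∧ i ≤ M.N n ω ∧ deg M n r ω i = 0}.Finite :=
    (finite_Iic (M.N n ω)).subset fun i hi => hi.2.1
  have hdeg : ∀ i, deg M n r ω i = 0 ↔ ∀ j, ¬ adj M n r ω i j := fun i => by
    have : {j : ℕ | adj M n r ω i j}.Finite :=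
      (finite_Iic (M.N n ω)).subset fun j hj => hj.2.2.2.2.1
    rw [deg, ncard_eq_zero this, eq_empty_iff_forall_notMem]
    rfl
  have hiso : ∀ i < M.N n ω,
      (ω ∈ M.isolatedIn r (M.N n ω) i ↔ ∀ j, ¬ adj M n r ω (i + 1) j) := by
    intro i hi
    constructor
    · rintro h j ⟨h1, h2, h3, h4, h5, h6⟩
      obtain ⟨k, rfl⟩ : ∃ k, j = k + 1 := ⟨j - 1, by omega⟩
      have := h k (Finset.mem_erase.2 ⟨by omega, Finset.mem_range.2 (by omega)⟩)
      rw [NonAdj, M.conn_eq hr, edgeVar] at this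
      rw [min_add_add_right, max_add_add_right] at h6
      exact absurd h6 (not_le.2 this)
    · intro h k hk
      rw [Finset.mem_erase, Finset.mem_range] at hk
      have := h (k + 1)
      rw [NonAdj, M.conn_eq hr, edgeVar]
      by_contra hlt
      refine this ⟨by omega, by omega, by omega, by omega, by omega, ?_⟩
      rw [min_add_add_right, max_add_add_right]
      exact not_lt.1 hlt
  rw [isolatedCount, ncard_eq_zero hfin, eq_empty_iff_forall_notMem]
  constructor
  · intro h i hi hmem
    exact h (i + 1) ⟨by omega, by omega, (hdeg _).2 ((hiso i hi).1 hmem)⟩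
  · rintro h j ⟨h1, h2, h3⟩
    obtain ⟨k, rfl⟩ : ∃ k, j = k + 1 := ⟨j - 1, by omega⟩
    exact h k (by omega) ((hiso k (by omega)).2 ((hdeg _).1 h3))

lemma isolatedIn_anti (M : Model d P) {r s : ℝ} (hr : 0 < r) (hrs : r ≤ s) {m m' : ℕ}
    (hm : m ≤ m') (i : ℕ) : M.isolatedIn s m' i ⊆ M.isolatedIn r m i := by
  intro ω hω k hk
  rw [Finset.mem_erase, Finset.mem_range] at hk
  exact (M.conn_mono hr hrs _ _).trans_lt
    (hω k (Finset.mem_erase.2 ⟨hk.1, Finset.mem_range.2 (hk.2.trans_le hm)⟩))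

lemma isolatedCount_eq_zero_of_notMem (M : Model d P) {n m₁ m₂ : ℕ} {r : ℝ} (hr : 0 < r) {ω : Ω}
    (h1 : m₁ ≤ M.N n ω) (h2 : M.N n ω ≤ m₂)
    (h : ω ∉ {ω | ∃ i < m₂, ω ∈ M.isolatedIn r m₁ i}) : isolatedCount M n r ω = 0 :=
  (M.isolatedCount_eq_zero_iff n hr ω).2 fun i hi hmem =>
    h ⟨i, hi.trans_le h2, M.isolatedIn_anti hr le_rfl h1 i hmem⟩

lemma critRadius_le (M : Model d P) {n : ℕ} {r : ℝ} (hr : 0 < r) {ω : Ω}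
    (h : isolatedCount M n r ω = 0) : critRadius M n ω ≤ r :=
  csInf_le ⟨0, fun _ hs => hs.1.le⟩ ⟨hr, h⟩

lemma critRadius_nonneg (M : Model d P) (n : ℕ) (ω : Ω) : 0 ≤ critRadius M n ω :=
  Real.sInf_nonneg fun _ hs => hs.1.le

lemma le_critRadius (M : Model d P) {n m₁ m₂ : ℕ} {r : ℝ} {ω : Ω}
    (h1 : m₁ ≤ M.N n ω) (h2 : M.N n ω ≤ m₂)
    (h : ω ∉ {ω | ∀ i < m₁, ω ∉ M.isolatedIn r m₂ i})
    (hne : ∃ s, 0 < s ∧ isolatedCount M n s ω = 0) : r ≤ critRadius M n ω := by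
  refine le_csInf hne fun s hs => ?_
  by_contra hlt
  refine h fun i hi hmem => ?_
  exact (M.isolatedCount_eq_zero_iff n hs.1 ω).1 hs.2 i (hi.trans_le h1)
    (M.isolatedIn_anti hs.1 (not_le.1 hlt).le h2 i hmem)

end Model

/-! ### Borel–Cantelli and concentration of the Poisson counts -/

lemma ae_eventually_notMem_of_le [IsFiniteMeasure P] {s : ℕ → Set Ω} {b : ℕ → ℝ}
    (hb : Summable b) (h : ∀ᶠ k in atTop, P.real (s k) ≤ b k) :
    ∀ᵐ ω ∂P, ∀ᶠ k in atTop, ω ∉ s k := by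
  have hs : Summable fun k => P.real (s k) := by
    refine hb.of_norm_bounded_eventually_nat ?_
    filter_upwards [h] with k hk
    rwa [Real.norm_of_nonneg measureReal_nonneg]
  refine ae_eventually_notMem ?_
  simpa only [ofReal_measureReal (measure_ne_top P _)] using hs.tsum_ofReal_ne_top

namespace Model

lemma hasLaw_N (M : Model d P) (n : ℕ) : HasLaw (M.N n) (poissonMeasure n) P where
  aemeasurable := (M.N_meas n).aemeasurable
  map_eq := by
    refine Measure.ext_of_singleton fun k => ?_
    rw [Measure.map_apply (M.N_meas n) (measurableSet_singleton k), poissonMeasure_singleton]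
    exact M.N_poisson n k

lemma hasSum_exp_N (n : ℕ) (t : ℝ) :
    HasSum (fun k : ℕ => Real.exp (-(n : ℝ)) * (n : ℝ) ^ k / k.factorial * Real.exp (t * k))
      (Real.exp (n * (Real.exp t - 1))) := by
  have h := (NormedSpace.expSeries_div_hasSum_exp (n * Real.exp t : ℝ)).mul_left
    (Real.exp (-(n : ℝ)))
  rw [← Real.exp_eq_exp_ℝ, ← Real.exp_add] at h
  rw [show n * (Real.exp t - 1) = -(n : ℝ) + n * Real.exp t by ring]
  refine h.congr_fun fun k => ?_
  rw [mul_comm t, Real.exp_nat_mul, mul_pow]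
  ring

lemma integrable_exp_N (M : Model d P) (n : ℕ) (t : ℝ) :
    Integrable (fun ω => Real.exp (t * M.N n ω)) P := by
  have h : Integrable (fun k : ℕ => Real.exp (t * k)) (poissonMeasure n) := by
    rw [integrable_poissonMeasure_iff]
    simpa [abs_of_pos (Real.exp_pos _)] using (hasSum_exp_N n t).summable
  rw [← (M.hasLaw_N n).map_eq] at h
  exact h.comp_measurable (M.N_meas n)

lemma mgf_N (M : Model d P) (n : ℕ) (t : ℝ) :
    mgf (fun ω => (M.N n ω : ℝ)) P t = Real.exp (n * (Real.exp t - 1)) := by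
  have h := (M.hasLaw_N n).integral_comp (f := fun k : ℕ => Real.exp (t * k))
    (by fun_prop)
  rw [mgf]
  refine h.trans ?_
  rw [integral_poissonMeasure]
  exact (hasSum_exp_N n t).tsum_eq

/-- The Poisson counts are asymptotically equal to their means, up to a factor `ρ > 1`. -/
lemma ae_eventually_N_mem [IsProbabilityMeasure P] (M : Model d P) {ρ : ℝ} (hρ : 1 < ρ) :
    ∀ᵐ ω ∂P, ∀ᶠ n : ℕ in atTop, (n : ℝ) / ρ ≤ M.N n ω ∧ (M.N n ω : ℝ) ≤ ρ * n := by
  have hρ0 : 0 < ρ := by linarith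
  have hL : 0 < Real.log ρ := Real.log_pos hρ
  have hL1 : Real.log ρ < ρ - 1 := Real.log_lt_sub_one_of_pos hρ0 hρ.ne'
  have hL2 : Real.log ρ⁻¹ < ρ⁻¹ - 1 :=
    Real.log_lt_sub_one_of_pos (inv_pos.2 hρ0) (inv_lt_one_of_one_lt₀ hρ).ne
  rw [Real.log_inv] at hL2
  have hgeom : ∀ a : ℝ, a < 0 → Summable fun n : ℕ => Real.exp (n * a) := fun a ha => by
    simp only [Real.exp_nat_mul]
    exact summable_geometric_of_lt_one (Real.exp_pos _).le (Real.exp_lt_one_iff.2 ha)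
  have hup : ∀ᵐ ω ∂P, ∀ᶠ n : ℕ in atTop, ω ∉ {ω | ρ * n ≤ (M.N n ω : ℝ)} := by
    refine ae_eventually_notMem_of_le (hgeom (ρ - 1 - ρ * Real.log ρ) ?_)
      (Eventually.of_forall fun n => ?_)
    · have : ρ * (-Real.log ρ) < ρ * (ρ⁻¹ - 1) := mul_lt_mul_of_pos_left hL2 hρ0
      rw [mul_sub, mul_inv_cancel₀ hρ0.ne'] at this
      linarith
    · refine (measure_ge_le_exp_mul_mgf (ρ * n) hL.le (M.integrable_exp_N n _)).trans (le_of_eq ?_)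
      rw [M.mgf_N, ← Real.exp_add, Real.exp_log hρ0]
      congr 1; ring
  have hlow : ∀ᵐ ω ∂P, ∀ᶠ n : ℕ in atTop, ω ∉ {ω | (M.N n ω : ℝ) ≤ n / ρ} := by
    refine ae_eventually_notMem_of_le (hgeom (ρ⁻¹ - 1 + Real.log ρ * ρ⁻¹) ?_)
      (Eventually.of_forall fun n => ?_)
    · have : Real.log ρ * ρ⁻¹ < (ρ - 1) * ρ⁻¹ := mul_lt_mul_of_pos_right hL1 (inv_pos.2 hρ0)
      rw [sub_mul, mul_inv_cancel₀ hρ0.ne'] at this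
      linarith
    · refine (measure_le_le_exp_mul_mgf (t := -Real.log ρ) (n / ρ) (by linarith)
        (M.integrable_exp_N n _)).trans (le_of_eq ?_)
      rw [M.mgf_N, ← Real.exp_add, Real.exp_neg, Real.exp_log hρ0]
      congr 1; ring
  filter_upwards [hup, hlow] with ω h1 h2
  filter_upwards [h1, h2] with n h1 h2
  exact ⟨(not_le.1 h2).le, (not_le.1 h1).le⟩

end Model

/-! ### Almost sure bounds along geometric blocks -/

namespace Model

/-- The radius at which the expected degree scale `α r ^ d` equals `τ`. -/
def radius (M : Model d P) (τ : ℝ) : ℝ := (τ / M.α) ^ ((d : ℝ)⁻¹)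

lemma radius_pos (M : Model d P) {τ : ℝ} (hτ : 0 < τ) : 0 < M.radius τ :=
  Real.rpow_pos_of_pos (div_pos hτ M.α_pos) _

lemma radius_pow (M : Model d P) (hd : d ≠ 0) {τ : ℝ} (hτ : 0 ≤ τ) : M.radius τ ^ d = τ / M.α :=
  Real.rpow_inv_natCast_pow (div_nonneg hτ M.α_pos.le) hd

lemma α_mul_radius_pow (M : Model d P) (hd : d ≠ 0) {τ : ℝ} (hτ : 0 ≤ τ) :
    M.α * M.radius τ ^ d = τ := by
  rw [M.radius_pow hd hτ, mul_div_cancel₀ _ M.α_pos.ne']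

lemma tendsto_radius (M : Model d P) (hd : d ≠ 0) {τ : ℕ → ℝ} (h0 : ∀ᶠ k in atTop, 0 < τ k)
    (h : Tendsto τ atTop (nhds 0)) :
    Tendsto (fun k => M.radius (τ k)) atTop (nhdsWithin 0 (Ioi 0)) := by
  refine tendsto_nhdsWithin_iff.2 ⟨?_, h0.mono fun k hk => M.radius_pos hk⟩
  have h1 := (h.div_const M.α).rpow_const (p := (d : ℝ)⁻¹) (Or.inr (by positivity))
  rwa [zero_div, Real.zero_rpow (by positivity)] at h1

lemma tendsto_natCast_mul_div_pow {ρ : ℝ} (hρ : 1 < ρ) (a b : ℝ) :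
    Tendsto (fun k : ℕ => a * (k + b) / ρ ^ k) atTop (nhds 0) := by
  have h1 := tendsto_pow_const_div_const_pow_of_one_lt 1 hρ
  have h2 := tendsto_pow_const_div_const_pow_of_one_lt 0 hρ
  have h := (h1.const_mul a).add (h2.const_mul (a * b))
  simp only [mul_zero, add_zero] at h
  refine h.congr fun k => ?_
  ring

/-- Almost surely, eventually along the blocks, no vertex is isolated above the threshold. -/
lemma ae_eventually_notMem_exists_isolatedIn [IsProbabilityMeasure P] (M : Model d P)
    (hd : d ≠ 0) {ρ : ℝ} (hρ : 1 < ρ) :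
    ∀ᵐ ω ∂P, ∀ᶠ k : ℕ in atTop, ω ∉ {ω | ∃ i < ⌊ρ ^ 2 * ρ ^ k⌋₊,
      ω ∈ M.isolatedIn (M.radius (ρ ^ 4 * Real.log ρ * k / ρ ^ k)) ⌈ρ ^ k / ρ⌉₊ i} := by
  have hρ0 : 0 < ρ := by linarith
  have hL : 0 < Real.log ρ := Real.log_pos hρ
  set τ : ℕ → ℝ := fun k => ρ ^ 4 * Real.log ρ * k / ρ ^ k with hτ
  have hτpos : ∀ᶠ k in atTop, 0 < τ k := by
    filter_upwards [eventually_gt_atTop 0] with k hk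
    have : (0 : ℝ) < k := by exact_mod_cast hk
    positivity
  have hτlim : Tendsto τ atTop (nhds 0) := by
    simpa using tendsto_natCast_mul_div_pow hρ (ρ ^ 4 * Real.log ρ) 0
  have hp := (M.tendsto_radius hd hτpos hτlim).eventually
    (M.eventually_le_connProb (inv_lt_one_of_one_lt₀ hρ))
  have hsum : Summable fun k : ℕ => ρ ^ 2 * (ρ * Real.exp (-(ρ * Real.log ρ))) ^ k := by
    refine (summable_geometric_of_lt_one (by positivity) ?_).mul_left _
    nth_rw 1 [← Real.exp_log hρ0]
    rw [← Real.exp_add, Real.exp_lt_one_iff]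
    nlinarith
  have hlarge : ∀ᶠ k : ℕ in atTop, ρ ^ 2 / (ρ - 1) ≤ ρ ^ k :=
    (tendsto_pow_atTop_atTop_of_one_lt hρ).eventually_ge_atTop _
  refine ae_eventually_notMem_of_le hsum ?_
  filter_upwards [hp, hτpos, hlarge] with k hk hτk hlk
  refine (M.measureReal_exists_isolatedIn_le _ _ _).trans ?_
  rw [M.α_mul_radius_pow hd hτk.le] at hk
  have hx : 0 < ρ ^ k := by positivity
  have hm₁ : ρ ^ k / ρ ^ 2 ≤ (⌈ρ ^ k / ρ⌉₊ : ℝ) - 1 := by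
    refine le_trans ?_ (sub_le_sub_right (Nat.le_ceil (ρ ^ k / ρ)) 1)
    rw [div_le_iff₀ (by linarith)] at hlk
    rw [div_le_iff₀ (by positivity), sub_mul]
    have : ρ ^ k / ρ * ρ ^ 2 = ρ ^ k * ρ := by field_simp
    rw [this]
    linarith
  have hexp : ρ * Real.log ρ * k ≤
      M.connProb (M.radius (τ k)) * ((⌈ρ ^ k / ρ⌉₊ : ℝ) - 1) := by
    calc ρ * Real.log ρ * k = ρ⁻¹ * τ k * (ρ ^ k / ρ ^ 2) := by rw [hτ]; field_simp
      _ ≤ _ := mul_le_mul hk hm₁ (by positivity) (M.connProb_nonneg _)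
  calc _ ≤ ρ ^ 2 * ρ ^ k * Real.exp (-(ρ * Real.log ρ * k)) := by
        gcongr
        exact Nat.floor_le (by positivity)
    _ = _ := by
        rw [mul_pow, ← Real.exp_nat_mul, mul_assoc]
        congr 4
        ring

/-- The connection function decays faster than any geometric sequence along a geometric
sequence of distances. -/
lemma eventually_gExt_le (M : Model d P) {c : ℝ} (hc : 0 < c)
    (hg : M.g =o[atTop] fun r : ℝ => Real.exp (-(c * r))) {σ : ℝ} (hσ : 1 < σ) (a : ℝ) :
    ∀ᶠ k : ℕ in atTop, M.gExt (σ ^ k / 2) ≤ Real.exp (-(a * k)) := by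
  have hlim : Tendsto (fun k : ℕ => σ ^ k / 2) atTop atTop :=
    (tendsto_pow_atTop_atTop_of_one_lt hσ).atTop_div_const (by norm_num)
  have h1 := hlim.eventually (hg.bound zero_lt_one)
  have h2 : ∀ᶠ k : ℕ in atTop, a * (k + 0) / σ ^ k < c / 2 :=
    (tendsto_natCast_mul_div_pow hσ a 0).eventually_lt_const (by positivity)
  filter_upwards [h1, h2] with k h1 h2
  have hσk : 0 < σ ^ k := by positivity
  rw [M.gExt_of_nonneg (by positivity)]
  rw [one_mul, Real.norm_of_nonneg (Real.exp_pos _).le] at h1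
  refine (le_abs_self _).trans (h1.trans (Real.exp_le_exp.2 (neg_le_neg ?_)))
  rw [div_lt_iff₀ hσk] at h2
  linarith

lemma summable_add_one_mul_exp {a : ℝ} (ha : a < 0) :
    Summable fun k : ℕ => ((k : ℝ) + 1) * Real.exp (a * k) := by
  have hlt : ‖Real.exp a‖ < 1 := by
    rw [Real.norm_of_nonneg (Real.exp_pos _).le]
    exact Real.exp_lt_one_iff.2 ha
  have h := (summable_pow_mul_geometric_of_norm_lt_one 1 hlt).add
    (summable_pow_mul_geometric_of_norm_lt_one 0 hlt)
  refine h.congr fun k => ?_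
  rw [mul_comm a, Real.exp_nat_mul]
  ring

/-- Almost surely, eventually along the blocks, some vertex is isolated below the threshold. -/
lemma ae_eventually_notMem_forall_notMem_isolatedIn [IsProbabilityMeasure P] (M : Model d P)
    (hd : d ≠ 0) {c : ℝ} (hc : 0 < c)
    (hg : M.g =o[atTop] fun r : ℝ => Real.exp (-(c * r))) {ρ : ℝ} (hρ : 1 < ρ) :
    ∀ᵐ ω ∂P, ∀ᶠ k : ℕ in atTop, ω ∉ {ω | ∀ i < ⌈ρ ^ k / ρ⌉₊,
      ω ∉ M.isolatedIn (M.radius (Real.log ρ / ρ ^ 5 * (k + 1) / ρ ^ k)) ⌊ρ ^ 2 * ρ ^ k⌋₊ i} := by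
  have hρ0 : 0 < ρ := by linarith
  have hL : 0 < Real.log ρ := Real.log_pos hρ
  set ℓ := Real.log ρ with hℓ
  have hpow : ∀ k : ℕ, ρ ^ k = Real.exp (ℓ * k) := fun k => by
    rw [mul_comm, Real.exp_nat_mul, hℓ, Real.exp_log hρ0]
  set β := (ρ ^ 2)⁻¹ with hβ
  have hβ0 : 0 < β := by positivity
  have hβ1 : β < 1 := inv_lt_one_of_one_lt₀ (one_lt_pow₀ hρ (by norm_num))
  set b := (1 - β) / 2 * ℓ with hb
  have hb0 : 0 < b := by
    have : 0 < 1 - β := by linarith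
    positivity
  set σ := Real.exp (b / d) with hσdef
  have hσ : 1 < σ := Real.one_lt_exp_iff.2 (div_pos hb0 (by positivity))
  have hσd : ∀ k : ℕ, (σ ^ k) ^ d = Real.exp (b * k) := fun k => by
    rw [← pow_mul, hσdef, ← Real.exp_nat_mul]
    congr 1
    push_cast
    field_simp
  set τ : ℕ → ℝ := fun k => ℓ / ρ ^ 5 * (k + 1) / ρ ^ k with hτ
  have hτpos : ∀ k, 0 < τ k := fun k => by positivity
  have hτlim : Tendsto τ atTop (nhds 0) := tendsto_natCast_mul_div_pow hρ (ℓ / ρ ^ 5) 1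
  have hτexp : ∀ k, τ k = ℓ / ρ ^ 5 * ((k + 1) * Real.exp (-ℓ * k)) := fun k => by
    simp only [hτ, hpow k, neg_mul, Real.exp_neg]
    ring
  set κ := (volume (Metric.ball (0 : EuclideanSpace ℝ (Fin d)) 1)).toReal
  have hκ : 0 ≤ κ := ENNReal.toReal_nonneg
  set y : ℕ → ℝ := fun k => 4 * τ k + 8 * ρ ^ 2 * Real.exp (-ℓ * k) with hy
  have hexpsum : Summable fun k : ℕ => Real.exp (-ℓ * k) := by
    simp only [mul_comm (-ℓ), Real.exp_nat_mul]
    exact summable_geometric_of_lt_one (Real.exp_pos _).le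
      (Real.exp_lt_one_iff.2 (neg_neg_of_pos hL))
  have hysum : Summable y := by
    refine Summable.add (Summable.mul_left _ ?_) (hexpsum.mul_left _)
    exact ((summable_add_one_mul_exp (neg_neg_of_pos hL)).mul_left _).congr fun k => (hτexp k).symm
  have hT1 : Summable fun k : ℕ =>
      ρ * Real.exp (β * ℓ) * (((k : ℝ) + 1) * Real.exp ((β - 1) * ℓ * k)) :=
    (summable_add_one_mul_exp (mul_neg_of_neg_of_pos (by linarith) hL)).mul_left _
  have hT2 : Summable fun k : ℕ =>
      κ * (ℓ / ρ ^ 5 / M.α) * Real.exp (β * ℓ) * (((k : ℝ) + 1) * Real.exp (-b * k)) :=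
    (summable_add_one_mul_exp (neg_neg_of_pos hb0)).mul_left _
  refine ae_eventually_notMem_of_le ((hT1.add hT2).add (hysum.mul_left 2)) ?_
  have hlarge : ∀ᶠ k : ℕ in atTop, 2 ≤ ρ ^ k :=
    (tendsto_pow_atTop_atTop_of_one_lt hρ).eventually_ge_atTop _
  have hlarge' : ∀ᶠ k : ℕ in atTop, 1 / (ρ - 1) ≤ ρ ^ k :=
    (tendsto_pow_atTop_atTop_of_one_lt hρ).eventually_ge_atTop _
  filter_upwards [hlarge, hlarge', hτlim.eventually_le_const (u := 1 / 2) (by norm_num),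
    hτlim.eventually_le_const (u := 1 - ρ⁻¹) (by linarith [inv_lt_one_of_one_lt₀ hρ]),
    hysum.tendsto_atTop_zero.eventually_le_const (u := 1) (by norm_num),
    M.eventually_gExt_le hc hg hσ (2 * ℓ)] with k hlk hlk' hτ1 hτ2 hyk hgk
  have hx : 0 < ρ ^ k := by positivity
  have hr := M.radius_pos (hτpos k)
  set r := M.radius (τ k) with hrdef
  have hpτ : M.connProb r ≤ τ k := by
    rw [← M.α_mul_radius_pow hd (hτpos k).le]
    exact M.connProb_le hr
  have hp0 := M.connProb_nonneg r
  have hm₁ : ρ ^ k / ρ ≤ ⌈ρ ^ k / ρ⌉₊ := Nat.le_ceil _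
  have hm₂ : (⌊ρ ^ 2 * ρ ^ k⌋₊ : ℝ) ≤ ρ ^ 2 * ρ ^ k := Nat.floor_le (by positivity)
  have hle : ρ ^ k / ρ + 1 ≤ ρ ^ 2 * ρ ^ k := by
    rw [div_le_iff₀ (by linarith)] at hlk'
    have h1 : ρ ^ k / ρ ≤ ρ ^ k := div_le_self hx.le hρ.le
    have h2 : ρ * ρ ^ k ≤ ρ ^ 2 * ρ ^ k := by
      gcongr
      exact le_self_pow₀ hρ.le (by norm_num)
    linarith
  have hm₁₂ : ⌈ρ ^ k / ρ⌉₊ ≤ ⌊ρ ^ 2 * ρ ^ k⌋₊ :=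
    Nat.le_floor ((Nat.ceil_lt_add_one (by positivity)).le.trans hle)
  have h2 : 2 ≤ ⌊ρ ^ 2 * ρ ^ k⌋₊ := by
    refine Nat.le_floor ?_
    push_cast
    nlinarith [one_le_pow₀ hρ.le (n := 2)]
  have hs : 0 ≤ r * σ ^ k := by positivity
  refine (M.measureReal_forall_notMem_isolatedIn_le hr hs (Nat.ceil_pos.2 (by positivity)) hm₁₂ h2
    (hpτ.trans hτ1)).trans ?_
  have hQ : Real.exp (⌊ρ ^ 2 * ρ ^ k⌋₊ * (M.connProb r / (1 - M.connProb r))) ≤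
      Real.exp (β * ℓ) * Real.exp (β * ℓ * k) := by
    rw [← Real.exp_add]
    refine Real.exp_le_exp.2 ?_
    have hpp : M.connProb r / (1 - M.connProb r) ≤ ρ * τ k := by
      have : ρ⁻¹ ≤ 1 - M.connProb r := by linarith
      calc _ ≤ τ k / ρ⁻¹ := div_le_div₀ (hτpos k).le hpτ (by positivity) this
        _ = ρ * τ k := by field_simp
    calc _ ≤ ρ ^ 2 * ρ ^ k * (ρ * τ k) := by
          refine mul_le_mul hm₂ hpp (div_nonneg hp0 ?_) (by positivity)
          linarith
      _ = _ := by rw [hτ, hβ]; field_simp; ring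
  set Q := Real.exp (⌊ρ ^ 2 * ρ ^ k⌋₊ * (M.connProb r / (1 - M.connProb r)))
  have hk1 : (1 : ℝ) ≤ k + 1 := by linarith [Nat.cast_nonneg (α := ℝ) k]
  refine add_le_add (add_le_add ?_ ?_) ?_
  · calc Q / ⌈ρ ^ k / ρ⌉₊ ≤ Real.exp (β * ℓ) * Real.exp (β * ℓ * k) / (ρ ^ k / ρ) := by gcongr
      _ = ρ * Real.exp (β * ℓ) * (1 * Real.exp ((β - 1) * ℓ * k)) := by
          rw [hpow k, show (β - 1) * ℓ * k = β * ℓ * k - ℓ * k by ring, Real.exp_sub]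
          field_simp
      _ ≤ _ := by gcongr
  · calc κ * (r * σ ^ k) ^ d * Q
        ≤ κ * (r * σ ^ k) ^ d * (Real.exp (β * ℓ) * Real.exp (β * ℓ * k)) := by gcongr
      _ = _ := by
          rw [mul_pow, hσd, hrdef, M.radius_pow hd (hτpos k).le, hτexp,
            show -b * (k : ℝ) = -ℓ * k + b * k + β * ℓ * k by rw [hb]; ring, Real.exp_add,
            Real.exp_add]
          ring
  · have hg' : M.gExt (r * σ ^ k / (2 * r)) ≤ Real.exp (-(2 * ℓ * k)) := by
      rwa [mul_comm 2 r, mul_div_mul_left _ _ hr.ne']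
    have hyle : 4 * M.connProb r + 8 * ⌊ρ ^ 2 * ρ ^ k⌋₊ * M.gExt (r * σ ^ k / (2 * r)) ≤ y k := by
      refine add_le_add (by linarith) ?_
      calc _ ≤ 8 * (ρ ^ 2 * ρ ^ k) * Real.exp (-(2 * ℓ * k)) := by
            have := M.gExt_nonneg (r * σ ^ k / (2 * r))
            gcongr
        _ = 8 * ρ ^ 2 * Real.exp (-ℓ * k) := by
            rw [hpow k, show -ℓ * (k : ℝ) = ℓ * k + -(2 * ℓ * k) by ring, Real.exp_add]
            ring
    have hy0 : 0 ≤ y k := by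
      have := hτpos k
      positivity
    refine (sub_le_sub_right (Real.exp_le_exp.2 hyle) 1).trans ?_
    have := Real.abs_exp_sub_one_le (x := y k) (by rwa [abs_of_nonneg hy0])
    rw [abs_of_nonneg hy0] at this
    exact (le_abs_self _).trans this

/-- Real numbers tending to infinity lie in blocks whose index tends to infinity. -/
lemma eventually_exists_block {ρ : ℝ} (hρ : 1 < ρ) {Q : ℕ → Prop} (hQ : ∀ᶠ k in atTop, Q k) :
    ∀ᶠ n : ℕ in atTop, ∃ k, Q k ∧ 0 < k ∧ ρ ^ k ≤ n ∧ (n : ℝ) < ρ ^ (k + 1) := by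
  obtain ⟨K, hK⟩ := eventually_atTop.1 hQ
  filter_upwards [tendsto_natCast_atTop_atTop.eventually_ge_atTop (ρ ^ (K + 1))] with n hn
  obtain ⟨k, hk1, hk2⟩ := exists_nat_pow_near ((one_le_pow₀ hρ.le).trans hn) hρ
  have : K + 1 < k + 1 := (pow_lt_pow_iff_right₀ hρ).1 (hn.trans_lt hk2)
  exact ⟨k, hK k (by omega), by omega, hk1, hk2⟩

/-- Two-sided almost sure bounds for the normalised critical radius. -/
lemma ae_eventually_critRadius_mem [IsProbabilityMeasure P] (M : Model d P)
    (hd : d ≠ 0) {c : ℝ} (hc : 0 < c)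
    (hg : M.g =o[atTop] fun r : ℝ => Real.exp (-(c * r))) {ρ : ℝ} (hρ : 1 < ρ) :
    ∀ᵐ ω ∂P, ∀ᶠ n : ℕ in atTop, M.α * n * critRadius M n ω ^ d / Real.log n ∈
      Icc ((ρ ^ 5)⁻¹) (ρ ^ 5) := by
  have hρ0 : 0 < ρ := by linarith
  have hL : 0 < Real.log ρ := Real.log_pos hρ
  filter_upwards [M.ae_eventually_N_mem hρ, M.ae_eventually_notMem_exists_isolatedIn hd hρ,
    M.ae_eventually_notMem_forall_notMem_isolatedIn hd hc hg hρ] with ω hN hA hB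
  filter_upwards [hN, eventually_exists_block hρ (hA.and hB)] with n ⟨hN1, hN2⟩
    ⟨k, ⟨hAk, hBk⟩, hk, hn1, hn2⟩
  have hk0 : (0 : ℝ) < k := by exact_mod_cast hk
  have hx : 0 < ρ ^ k := by positivity
  have hn0 : (0 : ℝ) < n := hx.trans_le hn1
  have hm₁ : ⌈ρ ^ k / ρ⌉₊ ≤ M.N n ω := Nat.ceil_le.2 (le_trans (by gcongr) hN1)
  have hm₂ : M.N n ω ≤ ⌊ρ ^ 2 * ρ ^ k⌋₊ := by
    refine Nat.le_floor (hN2.trans ?_)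
    calc ρ * n ≤ ρ * ρ ^ (k + 1) := by gcongr
      _ = _ := by ring
  have hlog1 : k * Real.log ρ ≤ Real.log n := by
    rw [← Real.log_pow]
    exact Real.log_le_log hx hn1
  have hlog2 : Real.log n ≤ (k + 1) * Real.log ρ := by
    have := Real.log_le_log hn0 hn2.le
    rw [Real.log_pow] at this
    exact_mod_cast this
  have hlog0 : 0 < Real.log n := lt_of_lt_of_le (by positivity) hlog1
  have hτu : 0 < ρ ^ 4 * Real.log ρ * k / ρ ^ k := by positivity
  have hτl : 0 < Real.log ρ / ρ ^ 5 * (k + 1) / ρ ^ k := by positivity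
  have hzero := M.isolatedCount_eq_zero_of_notMem (M.radius_pos hτu) hm₁ hm₂ hAk
  have hupper := M.critRadius_le (M.radius_pos hτu) hzero
  have hlower := M.le_critRadius hm₁ hm₂ hBk ⟨_, M.radius_pos hτu, hzero⟩
  have hα := M.α_pos
  have hcr := M.critRadius_nonneg n ω
  constructor
  · rw [le_div_iff₀ hlog0]
    calc (ρ ^ 5)⁻¹ * Real.log n ≤ (ρ ^ 5)⁻¹ * ((k + 1) * Real.log ρ) := by gcongr
      _ = ρ ^ k * (Real.log ρ / ρ ^ 5 * (k + 1) / ρ ^ k) := by field_simp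
      _ ≤ n * (M.α * critRadius M n ω ^ d) := by
          rw [← M.α_mul_radius_pow hd hτl.le]
          have := M.radius_pos hτl
          gcongr
      _ = _ := by ring
  · rw [div_le_iff₀ hlog0]
    calc M.α * n * critRadius M n ω ^ d = n * (M.α * critRadius M n ω ^ d) := by ring
      _ ≤ ρ ^ (k + 1) * (ρ ^ 4 * Real.log ρ * k / ρ ^ k) := by
          rw [← M.α_mul_radius_pow hd hτu.le]
          gcongr
      _ = ρ ^ 5 * (k * Real.log ρ) := by field_simp; ring
      _ ≤ _ := by gcongr

end Model

/-- Theorem 1(ii): a.s. `α n d_n^d / log n → 1`. -/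
theorem critRadius_tendsto (hd : 2 ≤ d) [IsProbabilityMeasure P] (M : Model d P)
    {c : ℝ} (hc : 0 < c)
    (hg : M.g =o[atTop] fun r : ℝ => Real.exp (-(c * r))) :
    ∀ᵐ ω ∂P, Tendsto
      (fun n : ℕ => M.α * n * critRadius M n ω ^ d / Real.log n) atTop (nhds 1) := by
  have hlim : Tendsto (fun j : ℕ => (1 + 1 / ((j : ℝ) + 1)) ^ 5) atTop (nhds 1) := by
    simpa using (tendsto_one_div_add_atTop_nhds_zero_nat (𝕜 := ℝ)).const_add 1 |>.pow 5
  have hlim' : Tendsto (fun j : ℕ => ((1 + 1 / ((j : ℝ) + 1)) ^ 5)⁻¹) atTop (nhds 1) := by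
    simpa using hlim.inv₀ one_ne_zero
  have h := ae_all_iff.2 fun j : ℕ => M.ae_eventually_critRadius_mem (by omega) hc hg
    (ρ := 1 + 1 / ((j : ℝ) + 1)) (lt_add_of_pos_right 1 (by positivity))
  filter_upwards [h] with ω hω
  refine tendsto_order.2 ⟨fun a ha => ?_, fun a ha => ?_⟩
  · obtain ⟨j, hj⟩ := (hlim'.eventually_const_lt ha).exists
    exact (hω j).mono fun n hn => hj.trans_le hn.1
  · obtain ⟨j, hj⟩ := (hlim.eventually_lt_const ha).exists
    exact (hω j).mono fun n hn => hn.2.trans_lt hj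

end RCM
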